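/- arXiv:2101.04415 — 5 statements merged into one kernel-verified Lean document; each statement's English description precedes it below -/
import Mathlib

section
/- Let Γ be a finite simplicial graph that is connected, irreducible (i.e., Γ is not a nontrivial join, equivalently, the opposite graph Γ° is connected), and has at least two vertices. Then Γ admits a good partition of its vertex set. -/
/-- A *good partition* of the vertex set of a simplicial graph `Γ` into three
nonempty parts `Lp ⊔ L ⊔ Lm`. -/
def GoodPartition {V : Type*} (Γ : SimpleGraph V) (Lp L Lm : Set V) : Prop :=
  Lp.Nonempty ∧ L.Nonempty ∧ Lm.Nonempty ∧
  Disjoint Lp L ∧ Disjoint Lp Lm ∧ Disjoint L Lm ∧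
  Lp ∪ L ∪ Lm = Set.univ ∧
  (∀ w ∈ Lp, ∀ v ∈ Lm, 2 ≤ Γ.dist w v) ∧
  (∀ w ∈ Lp, ¬ ∃ v ∈ L ∪ Lm, Γ.neighborSet v ⊆ Γ.neighborSet w ∪ Lp) ∧
  (∀ w ∈ Lm, ¬ ∃ v ∈ L ∪ Lp, Γ.neighborSet v ⊆ Γ.neighborSet w ∪ Lm) ∧
  (∀ w ∈ Lp, (Γ.induce ((L ∪ Lm) \ (Γ.neighborSet w ∪ {w}))).Connected) ∧
  (∀ w ∈ Lm, (Γ.induce ((L ∪ Lp) \ (Γ.neighborSet w ∪ {w}))).Connected)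

def NNset {V : Type*} (G : SimpleGraph V) (C : Set V) : Set V :=
  {u | u ∉ C ∧ ∀ c ∈ C, ¬ G.Adj u c}

def HalfGood {V : Type*} (G : SimpleGraph V) (C : Set V) : Prop :=
  (G.induce C).Connected ∧ C.Nontrivial ∧ (NNset G C).Nonempty ∧
  ∀ u ∈ NNset G C, ∀ s, s ∉ C → s ∉ NNset G C → G.Adj u s

theorem boundary_aux {V : Type*} {G : SimpleGraph V} (h : G.Connected) (X : Set V) {x y : V}
    (hx : x ∈ X) (hy : y ∉ X) : ∃ a ∈ X, ∃ b, b ∉ X ∧ G.Adj a b := by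
  obtain ⟨p⟩ := h.preconnected x y
  obtain ⟨d, _, h1, h2⟩ := p.exists_boundary_dart X hx hy
  exact ⟨d.fst, h1, d.snd, h2, d.adj⟩

theorem insert_conn {V : Type*} {G : SimpleGraph V} {C : Set V} (h : (G.induce C).Connected)
    {c s : V} (hc : c ∈ C) (hs : G.Adj c s) : (G.induce (insert s C)).Connected := by
  have hsub : C ⊆ insert s C := Set.subset_insert s C
  rw [SimpleGraph.connected_iff_exists_forall_reachable]
  refine ⟨⟨c, hsub hc⟩, ?_⟩
  rintro ⟨v, rfl | hv⟩
  · exact SimpleGraph.Adj.reachable (by simpa using hs)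
  · exact (h.preconnected ⟨c, hc⟩ ⟨v, hv⟩).map (SimpleGraph.induceHomOfLE G hsub).toHom

theorem star_conn {V : Type*} {G : SimpleGraph V} {A : Set V} {s : V}
    (h : ∀ a ∈ A, G.Adj s a) : (G.induce (insert s A)).Connected := by
  rw [SimpleGraph.connected_iff_exists_forall_reachable]
  refine ⟨⟨s, Set.mem_insert s A⟩, ?_⟩
  rintro ⟨v, rfl | hv⟩
  · exact SimpleGraph.Reachable.refl _
  · exact SimpleGraph.Adj.reachable (by simpa using h v hv)

theorem exists_half {V : Type*} [Finite V] {G : SimpleGraph V} {T : Set V}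
    (h1 : (G.induce T).Connected) (h2 : T.Nontrivial) (h3 : (NNset G T).Nonempty) :
    ∃ C, T ⊆ C ∧ HalfGood G C := by
  obtain ⟨C, hTC, hC⟩ := Set.Finite.exists_le_maximal
    (s := {C : Set V | (G.induce C).Connected ∧ (NNset G C).Nonempty}) (Set.toFinite _)
    (a := T) ⟨h1, h3⟩
  refine ⟨C, hTC, hC.prop.1, h2.mono hTC, hC.prop.2, ?_⟩
  intro u hu s hs hs'
  by_contra hadj
  have : ∃ c ∈ C, G.Adj s c := by
    by_contra hcon
    push Not at hcon
    exact hs' ⟨hs, hcon⟩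
  obtain ⟨c, hc, hsc⟩ := this
  have hne : u ≠ s := by
    rintro rfl
    exact hs' hu
  have hmem : insert s C ∈ {C : Set V | (G.induce C).Connected ∧ (NNset G C).Nonempty} := by
    refine ⟨insert_conn hC.prop.1 hc hsc.symm, u, ?_, ?_⟩
    · rintro (h | h)
      · exact hne h
      · exact hu.1 h
    · rintro d (rfl | hd)
      · exact hadj
      · exact hu.2 d hd
  exact hs (hC.le_of_ge hmem (Set.subset_insert s C) (Set.mem_insert s C))

theorem half_ii {V : Type*} {G : SimpleGraph V} {C R : Set V} (h : HalfGood G C)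
    (hR : ∀ v ∈ R, v ∉ NNset G C) :
    ∀ w ∈ NNset G C, ¬ ∃ v ∈ R, G.neighborSet v ⊆ G.neighborSet w ∪ NNset G C := by
  rintro w hw ⟨v, hv, hsub⟩
  obtain ⟨hconn, hnt, -, -⟩ := h
  have key : ∃ c ∈ C, G.Adj v c := by
    by_cases hvC : v ∈ C
    · have : Nontrivial C := Set.nontrivial_coe_sort.2 hnt
      obtain ⟨c, hc⟩ := hconn.preconnected.exists_adj_of_nontrivial ⟨v, hvC⟩
      exact ⟨c, c.2, by simpa using hc⟩
    · by_contra hcon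
      push Not at hcon
      exact hR v hv ⟨hvC, hcon⟩
  obtain ⟨c, hc, hvc⟩ := key
  rcases hsub hvc with h | h
  · exact hw.2 c hc h
  · exact h.1 hc

theorem half_iii {V : Type*} {G : SimpleGraph V} {C R : Set V} (h : HalfGood G C)
    (hR : ∀ v, v ∈ R ↔ v ∉ NNset G C) :
    ∀ w ∈ NNset G C, (G.induce (R \ (G.neighborSet w ∪ {w}))).Connected := by
  intro w hw
  have : R \ (G.neighborSet w ∪ {w}) = C := by
    ext v
    constructor
    · rintro ⟨h1, h2⟩
      by_contra hv
      exact h2 (Or.inl (h.2.2.2 w hw v hv ((hR v).1 h1)))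
    · intro hv
      refine ⟨(hR v).2 fun h' => h'.1 hv, ?_⟩
      rintro (h' | h')
      · exact hw.2 v hv h'
      · exact hw.1 (h' ▸ hv)
  rw [this]
  exact h.1

theorem stmt2 {V : Type*} [Fintype V] (Γ : SimpleGraph V) (hconn : Γ.Connected)
    (hirr : Γᶜ.Connected) (hcard : 2 ≤ Fintype.card V) :
    ∃ Lp L Lm : Set V, GoodPartition Γ Lp L Lm := by
  have hnt : Nontrivial V := Fintype.one_lt_card_iff_nontrivial.1 hcard
  -- first set
  have step1 : ∃ C, HalfGood Γ C := by
    obtain ⟨x⟩ := hconn.nonempty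
    obtain ⟨y, hxy⟩ := hconn.preconnected.exists_adj_of_nontrivial x
    obtain ⟨a, ha, b, hb, hab⟩ := boundary_aux hirr {z | ¬ Γ.Adj x z} (x := x) (y := y)
      (by simp) (by simpa using hxy)
    simp only [Set.mem_setOf_eq, not_not] at ha hb
    rw [SimpleGraph.compl_adj] at hab
    have hax : a ≠ x := by
      rintro rfl
      exact hab.2 hb
    obtain ⟨C, -, hC⟩ := exists_half (G := Γ) (T := insert x {b})
      (star_conn (by simpa using hb)) (Set.nontrivial_pair hb.ne)
      ⟨a, by simp [hax, hab.1], by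
        rintro c (rfl | rfl)
        · exact fun h => ha h.symm
        · exact hab.2⟩
    exact ⟨C, hC⟩
  obtain ⟨C, hC⟩ := step1
  obtain ⟨a, ha⟩ := hC.2.2.1
  obtain ⟨c, hc⟩ := hC.2.1.nonempty
  have hS : ∃ s, s ∉ C ∧ s ∉ NNset Γ C := by
    obtain ⟨p, hp, q, hq, hpq⟩ := boundary_aux hconn C hc ha.1
    exact ⟨q, hq, fun h => h.2 p hp hpq.symm⟩
  have step2 : ∃ w ∈ C, ∃ s, s ∉ C ∧ s ∉ NNset Γ C ∧ ¬ Γ.Adj w s := by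
    obtain ⟨s, hs, hs'⟩ := hS
    obtain ⟨p, hp, q, hq, hpq⟩ := boundary_aux hirr (C ∪ NNset Γ C) (Or.inl hc)
      (y := s) (by simp [hs, hs'])
    rw [SimpleGraph.compl_adj] at hpq
    simp only [Set.mem_union, not_or] at hq
    rcases hp with hp | hp
    · exact ⟨p, hp, q, hq.1, hq.2, hpq.2⟩
    · exact absurd (hC.2.2.2 p hp q hq.1 hq.2) hpq.2
  obtain ⟨w, hw, s, hs, hs', hws⟩ := step2
  obtain ⟨D, hTD, hD⟩ := exists_half (G := Γ) (T := insert s (NNset Γ C))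
    (star_conn fun u hu => (hC.2.2.2 u hu s hs hs').symm)
    ⟨s, Set.mem_insert _ _, a, Set.mem_insert_of_mem _ ha, by rintro rfl; exact hs' ha⟩
    ⟨w, by
      rintro (rfl | h)
      · exact hs hw
      · exact h.1 hw, by
      rintro d (rfl | hd)
      · exact hws
      · exact fun h => hd.2 w hw h.symm⟩
  have hAD : ∀ u ∈ NNset Γ C, u ∈ D := fun u hu => hTD (Set.mem_insert_of_mem _ hu)
  have hdis : ∀ u ∈ NNset Γ C, u ∉ NNset Γ D := fun u hu h => h.1 (hAD u hu)
  have hsD : s ∉ NNset Γ D := fun h => h.1 (hTD (Set.mem_insert _ _))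
  refine ⟨NNset Γ C, {v | v ∉ NNset Γ C ∧ v ∉ NNset Γ D}, NNset Γ D, ⟨a, ha⟩, ⟨s, hs', hsD⟩,
    hD.2.2.1, ?_, ?_, ?_, ?_, ?_, half_ii hC ?_, half_ii hD ?_, half_iii hC ?_, half_iii hD ?_⟩
  · exact Set.disjoint_left.2 fun u hu h => h.1 hu
  · exact Set.disjoint_left.2 hdis
  · exact Set.disjoint_left.2 fun u h hu => h.2 hu
  · ext v
    simp only [Set.mem_union, Set.mem_setOf_eq, Set.mem_univ, iff_true]
    tauto
  · intro u hu v hv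
    have h0 : Γ.dist u v ≠ 0 := by
      rw [Ne, hconn.dist_eq_zero_iff]
      rintro rfl
      exact hdis u hu hv
    have h1 : Γ.dist u v ≠ 1 := by
      rw [Ne, SimpleGraph.dist_eq_one_iff_adj]
      exact fun h => hv.2 u (hAD u hu) h.symm
    omega
  all_goals
    intro v
    have := hdis v
    simp only [Set.mem_union, Set.mem_setOf_eq]
    tauto
end

section
/- Let M be a median algebra admitting an injective median morphism into a product of d rank-1 median algebras. Then for every subset A ⊆ M one has ⟨A⟩ = ℳ^{g(d)}(A), where g(d) = 1 + 2^{2^{d(d−1)/2}}. -/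
/-- A median algebra: a set with a ternary median operation satisfying the
standard axioms. -/
structure MedianAlgebra (X : Type*) where
  med : X → X → X → X
  absorb : ∀ a b, med a a b = a
  rot : ∀ a b c, med a b c = med b c a
  swap : ∀ a b c, med a b c = med b a c
  assoc : ∀ a x b c, med (med a x b) x c = med a x (med b x c)

/-- A subset `C` is convex for the median operation `med` if
`med(C × C × X) ⊆ C`. -/
def IsConvexSet {X : Type*} (med : X → X → X → X) (C : Set X) : Prop :=
  ∀ a ∈ C, ∀ b ∈ C, ∀ x : X, med a b x ∈ C

/-- A halfspace: a subset such that both it and its complement are nonempty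
and convex. -/
def IsHalfspace {X : Type*} (med : X → X → X → X) (h : Set X) : Prop :=
  h.Nonempty ∧ hᶜ.Nonempty ∧ IsConvexSet med h ∧ IsConvexSet med hᶜ

/-- Two halfspaces (equivalently, the walls they bound) are transverse if all
four pairwise intersections of associated halfspaces are nonempty. -/
def Transverse {X : Type*} (h k : Set X) : Prop :=
  (h ∩ k).Nonempty ∧ (h ∩ kᶜ).Nonempty ∧ (hᶜ ∩ k).Nonempty ∧ (hᶜ ∩ kᶜ).Nonempty

/-- The median algebra has rank at most `r`: any collection of pairwise
transverse (distinct) halfspaces has cardinality at most `r`. -/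
def RankLE {X : Type*} (med : X → X → X → X) (r : ℕ) : Prop :=
  ∀ H : Finset (Set X), (∀ h ∈ H, IsHalfspace med h) →
    (∀ h ∈ H, ∀ k ∈ H, h ≠ k → Transverse h k) → H.card ≤ r

/-- Rank 1: no two halfspaces are transverse. -/
def Rank1 {X : Type*} (M : MedianAlgebra X) : Prop :=
  ∀ h k : Set X, IsHalfspace M.med h → IsHalfspace M.med k → ¬ Transverse h k

/-- The operator `ℳ(A) = med(A × A × A)`. -/
def MSet {X : Type*} (med : X → X → X → X) (A : Set X) : Set X :=
  {p | ∃ a ∈ A, ∃ b ∈ A, ∃ c ∈ A, med a b c = p}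

/-- The median subalgebra generated by `A`: the smallest subset containing `A`
and closed under the median operation. -/
def medSpan {X : Type*} (med : X → X → X → X) (A : Set X) : Set X :=
  ⋂₀ {S : Set X | A ⊆ S ∧ ∀ a ∈ S, ∀ b ∈ S, ∀ c ∈ S, med a b c ∈ S}

/-- The coordinatewise median operation on a product. -/
def prodMed {X Y : Type*} (m₁ : X → X → X → X) (m₂ : Y → Y → Y → Y) :
    X × Y → X × Y → X × Y → X × Y :=
  fun p q r => (m₁ p.1 q.1 r.1, m₂ p.2 q.2 r.2)

namespace MA8

section basic
variable {X : Type*} (M : MedianAlgebra X)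

theorem s12 (a b c : X) : M.med a b c = M.med b a c := M.swap a b c
theorem s23 (a b c : X) : M.med a b c = M.med a c b := by
  rw [M.rot a b c, M.rot b c a, M.swap c a b]
theorem s13 (a b c : X) : M.med a b c = M.med c b a := by
  rw [M.rot a b c, M.swap b c a]

/-- `z` lies in the interval `[a,b]`. -/
def Bt (a z b : X) : Prop := M.med a z b = z

theorem Bt.symm {a z b : X} (h : Bt M a z b) : Bt M b z a := by
  unfold Bt at *; rw [s13]; exact h

theorem bt_left (a b : X) : Bt M a a b := M.absorb a b
theorem bt_right (a b : X) : Bt M a b b := by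
  unfold Bt; rw [s13]; exact M.absorb b a

theorem med_bt (a b t : X) : Bt M a (M.med a b t) b := by
  unfold Bt
  have h := M.assoc b a b t
  rw [s12 M b a b, s23 M a b b, s12 M a b b, s23 M b a b, M.absorb] at h
  have e1 : M.med b a t = M.med a b t := s12 M _ _ _
  rw [e1] at h
  rw [s12 M b a] at h
  rw [s23 M a (M.med a b t) b]
  exact h.symm

theorem med_bt2 (a b t : X) : Bt M a (M.med a b t) t := by
  rw [s23]; exact med_bt M a t b
theorem med_bt3 (a b t : X) : Bt M b (M.med a b t) t := by
  rw [s12]; exact med_bt2 M b a t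

theorem bt_trans {a w z b : X} (h1 : Bt M a z b) (h2 : Bt M a w z) : Bt M a w b := by
  unfold Bt at *
  have h := M.assoc w a z b
  rw [s12 M w a z, h2, s12 M z a b, h1, s12 M w a z, h2, s12] at h
  exact h

theorem bt_mid {a w z b : X} (h1 : Bt M a z b) (h2 : Bt M a w z) : Bt M w z b := by
  unfold Bt at *
  have h := M.assoc w z a b
  rw [h1] at h
  have e : M.med w z a = w := by rw [← M.rot]; exact h2
  have e2 : M.med w z z = z := bt_right M w z
  rw [e, e2] at h
  exact h

theorem bt_anti {a b c : X} (h1 : Bt M a b c) (h2 : Bt M b a c) : a = b := by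
  unfold Bt at *
  rw [s12] at h1
  exact h2.symm.trans h1

theorem L1 {u v g : X} (x : X) (hg : Bt M u g v) : Bt M x (M.med u v x) g := by
  set e := M.med u v x with he
  set p := M.med u x g with hp
  set q := M.med v x g with hq
  have hpu : Bt M u p g := med_bt2 M u x g
  have hpx : Bt M u p x := med_bt M u x g
  have hqv : Bt M v q g := med_bt2 M v x g
  have hqx : Bt M v q x := med_bt M v x g
  set h := M.med p x q with hh
  have hhe : h = M.med e x g := by
    have a1 : M.med e x g = M.med u x q := by
      rw [he, s23 M u v x, M.assoc u x v g]
    have a2 : h = M.med u x (M.med g x q) := by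
      rw [hh, hp, M.assoc]
    have a3 : M.med g x q = q := by
      have : Bt M x q g := by rw [hq]; exact med_bt3 M v x g
      rw [M.rot]; exact this
    rw [a1, a2, a3]
  have hpv : Bt M u p v := bt_trans M hg hpu
  have hgpv : Bt M p g v := bt_mid M hg hpu
  have q1 : Bt M u q v := (bt_trans M hg.symm hqv).symm
  have q2 : Bt M u g q := (bt_mid M hg.symm hqv).symm
  have p1 : Bt M u p q := bt_trans M q2 hpu
  have hhpq : Bt M p h q := med_bt2 M p x q
  have h1 : Bt M u h q := (bt_trans M p1.symm hhpq.symm).symm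
  have h2 : Bt M u h v := bt_trans M q1 h1
  have heg : Bt M x h e := by
    rw [hhe, s12]; exact med_bt M x e g
  have eu : Bt M u e x := med_bt2 M u v x
  have ev : Bt M v e x := med_bt3 M u v x
  have c1 : Bt M h e u := bt_mid M eu.symm heg
  have c2 : Bt M h e v := bt_mid M ev.symm heg
  have c3 : Bt M e h v := bt_mid M h2 c1.symm
  have c4 : h = e := (bt_anti M c3 c2).symm
  unfold Bt
  rw [s12, ← hhe, c4]

theorem L2 {x b p q w : X} (hw : Bt M p w q) (hp : Bt M b x p) (hq : Bt M b x q)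
    (hb : Bt M x b w) : b = x := by
  have k := L1 M b hw
  -- x ≤_b med p q b
  have k2 : Bt M b x (M.med p q b) := by
    unfold Bt at *
    have h := M.assoc x b p q
    have e1 : M.med x b p = x := by rw [s12]; exact hp
    have e2 : M.med x b q = x := by rw [s12]; exact hq
    rw [e1, e2, s23 M p b q] at h
    rw [s12]; exact h.symm
  exact (bt_anti M hb (bt_trans M k k2)).symm

theorem med_unique {a b c x : X} (h1 : Bt M a x b) (h2 : Bt M b x c) (h3 : Bt M a x c) :
    M.med a b c = x := by
  have k1 : Bt M c (M.med a b c) x := L1 M c h1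
  have k2 : Bt M a (M.med a b c) x := by
    rw [M.rot]; exact L1 M a h2
  have k3 := bt_mid M h3 k2
  exact (bt_anti M k3 k1.symm).symm.symm

end basic

section sep
variable {X : Type*} (M : MedianAlgebra X)

structure Fil (x y : X) (F : Set X) : Prop where
  up : ∀ u ∈ F, ∀ v, M.med u x v = u → v ∈ F
  inf : ∀ u ∈ F, ∀ v ∈ F, M.med u x v ∈ F
  y : y ∈ F
  nx : x ∉ F

theorem exists_halfspace {x y : X} (hxy : x ≠ y) :
    ∃ h : Set X, IsHalfspace M.med h ∧ y ∈ h ∧ x ∉ h := by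
  have hc : ∀ a b, M.med a x b = M.med b x a := fun a b => s13 M a x b
  have ha : ∀ a b c, M.med (M.med a x b) x c = M.med a x (M.med b x c) := fun a b c => M.assoc a x b c
  have hi : ∀ a, M.med a x a = a := fun a => by rw [s23]; exact M.absorb a x
  have hx : ∀ a, M.med x x a = x := fun a => M.absorb x a
  have hx2 : ∀ a, M.med a x x = x := fun a => by rw [hc]; exact hx a
  obtain ⟨F, hyF, hmax⟩ : ∃ F, {v | M.med y x v = y} ⊆ F ∧ Maximal (· ∈ {F | Fil M x y F}) F := by
    apply zorn_subset_nonempty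
    · intro c hcS hch hne
      refine ⟨⋃₀ c, ⟨?_, ?_, ?_, ?_⟩, fun s hs => Set.subset_sUnion_of_mem hs⟩
      · rintro u ⟨s, hs, hu⟩ v huv
        exact ⟨s, hs, (hcS hs).up u hu v huv⟩
      · rintro u ⟨s, hs, hu⟩ v ⟨t, ht, hv⟩
        rcases hch.total hs ht with h | h
        · exact ⟨t, ht, (hcS ht).inf u (h hu) v hv⟩
        · exact ⟨s, hs, (hcS hs).inf u hu v (h hv)⟩
      · obtain ⟨s, hs⟩ := hne
        exact ⟨s, hs, (hcS hs).y⟩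
      · rintro ⟨s, hs, h⟩
        exact (hcS hs).nx h
    · refine ⟨?_, ?_, ?_, ?_⟩
      · intro u hu v huv
        simp only [Set.mem_ofPred_eq] at *
        rw [← hu, ha, huv]
      · intro u hu v hv
        simp only [Set.mem_ofPred_eq] at *
        rw [← ha, hu, hv]
      · exact hi y
      · simp only [Set.mem_ofPred_eq]
        rw [hx2]; exact hxy
  have hF : Fil M x y F := hmax.prop
  have key : ∀ p ∉ F, ∃ c ∈ F, M.med c x p = x := by
    intro p hp
    by_contra hcon
    push Not at hcon
    let F' : Set X := {z | ∃ c ∈ F, M.med (M.med c x p) x z = M.med c x p}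
    have hF' : Fil M x y F' := by
      refine ⟨?_, ?_, ?_, ?_⟩
      · rintro u ⟨c, hc', hu⟩ v huv
        refine ⟨c, hc', ?_⟩
        calc _ = M.med (M.med (M.med c x p) x u) x v := by rw [hu]
          _ = _ := by rw [ha, huv, hu]
      · rintro u ⟨c, hc', hu⟩ v ⟨c', hc'', hv⟩
        refine ⟨_, hF.inf c hc' c' hc'', ?_⟩
        have e : M.med (M.med c x c') x p = M.med (M.med c x p) x (M.med c' x p) := by
          rw [ha, ha, hc p (M.med c' x p), ha c' p p, hi]
        rw [e, ← ha, ha (M.med c x p), hc _ u, ← ha, hu, ha, hv]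
      · refine ⟨y, hF.y, ?_⟩
        rw [hc y p, ha, hi]
      · rintro ⟨c, hc', h⟩
        rw [hx2] at h
        exact hcon c hc' h.symm
    have hsub : F ⊆ F' := by
      intro z hz
      refine ⟨z, hz, ?_⟩
      rw [hc z p, ha, hi]
    have := hmax.le_of_ge hF' hsub
    exact hp (this ⟨y, hF.y, by rw [ha, hi]⟩)
  refine ⟨F, ⟨⟨y, hF.y⟩, ⟨x, hF.nx⟩, ?_, ?_⟩, hF.y, hF.nx⟩
  · intro a haF b hb t
    have h1 := hF.inf a haF b hb
    refine hF.up _ h1 _ ?_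
    have := L1 M x (med_bt M a b t)
    unfold Bt at this
    rw [s23 M a b x] at this
    rw [s12]; exact this
  · intro p hp q hq t hw
    obtain ⟨c, hcF, hcp⟩ := key p hp
    obtain ⟨c', hcF', hcq⟩ := key q hq
    have hb := hF.inf _ (hF.inf c hcF c' hcF') _ hw
    set w := M.med p q t with hwd
    set b := M.med (M.med c x c') x w with hbd
    have bp : M.med b x p = x := by
      rw [hbd, hc c c', ha c' c w, hc c', hc c w, ha, ha, hc c', ← ha c p c', hcp, hx, hx2]
    have bq : M.med b x q = x := by
      rw [hbd, ha, hc w q, ha, ← ha c' q w, hcq, hx, hx2]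
    have bw : M.med b x w = b := by rw [hbd, ha, hi]
    have : b = x := L2 M (med_bt M p q t) bp bq (by unfold Bt; rw [s12]; exact bw)
    exact hF.nx (this ▸ hb)

theorem rel_trans (hr : Rank1 M) {x a b c : X} (h1 : ¬ Bt M a x b) (h2 : ¬ Bt M b x c) :
    ¬ Bt M a x c := by
  intro h3
  have n1 : x ≠ M.med a x b := fun h => h1 h.symm
  have n2 : x ≠ M.med b x c := fun h => h2 h.symm
  obtain ⟨h, hh, hy, hx⟩ := exists_halfspace M n1
  obtain ⟨k, hk, ky, kx⟩ := exists_halfspace M n2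
  have ah : a ∈ h := by
    by_contra hn
    exact hh.2.2.2 a hn x hx b hy
  have bh : b ∈ h := by
    by_contra hn
    exact hh.2.2.2 b hn x hx a (by rw [s13]; exact hy)
  have bk : b ∈ k := by
    by_contra hn
    exact hk.2.2.2 b hn x kx c ky
  have ck : c ∈ k := by
    by_contra hn
    exact hk.2.2.2 c hn x kx b (by rw [s13]; exact ky)
  have h3' : M.med a c x = x := by rw [s23]; exact h3
  have ch : c ∉ h := fun hn => hx (h3' ▸ hh.2.2.1 a ah c hn x)
  have ak : a ∉ k := fun hn => kx (h3' ▸ hk.2.2.1 a hn c ck x)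
  exact hr h k hh hk ⟨⟨b, bh, bk⟩, ⟨a, ah, ak⟩, ⟨c, ch, ck⟩, ⟨x, hx, kx⟩⟩

theorem rel_conv (hr : Rank1 M) {x p y z : X} (w : X) (h1 : ¬ Bt M p x y) (h2 : ¬ Bt M p x z) :
    ¬ Bt M p x (M.med y z w) := by
  have h3 : ¬ Bt M y x z := rel_trans M hr (fun h => h1 h.symm) h2
  have h4 : ¬ Bt M y x (M.med y z w) := fun h => h3 (bt_trans M (med_bt M y z w) h)
  exact rel_trans M hr h1 h4

end sep

theorem konig {X : Type*} (A : Set X) (R S : X → X → Prop)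
    (Rs : ∀ a b, R a b → R b a) (Ss : ∀ a b, S a b → S b a)
    (Rt : ∀ a b c, R a b → R b c → R a c) (St : ∀ a b c, S a b → S b c → S a c)
    (hRR : ∀ p q, ∃ b ∈ A, ¬ R p b ∧ ¬ R q b)
    (hSS : ∀ p q, ∃ b ∈ A, ¬ S p b ∧ ¬ S q b)
    (hRS : ∀ p q, ∃ b ∈ A, ¬ R p b ∧ ¬ S q b) (x : X) :
    ∃ a ∈ A, ∃ b ∈ A, ∃ c ∈ A, ¬ R a b ∧ ¬ R b c ∧ ¬ R a c ∧ ¬ S a b ∧ ¬ S b c ∧ ¬ S a c := by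
  have main : ∀ e1 ∈ A, ∀ e2 ∈ A, ∀ e ∈ A, ¬ R e1 e2 → ¬ S e1 e2 → ¬ R e1 e → ¬ R e2 e → S e1 e →
      ∃ a ∈ A, ∃ b ∈ A, ∃ c ∈ A,
        ¬ R a b ∧ ¬ R b c ∧ ¬ R a c ∧ ¬ S a b ∧ ¬ S b c ∧ ¬ S a c := by
    intro e1 h1 e2 h2 e he r12 s12 r1 r2 s1
    have s2 : ¬ S e2 e := fun h => s12 (St _ _ _ s1 (Ss _ _ h))
    obtain ⟨e', he', t1, t2⟩ := hSS e1 e2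
    have t3 : ¬ S e e' := fun h => t1 (St _ _ _ s1 h)
    by_cases q2 : R e2 e'
    · obtain ⟨g, hg, g2, g1⟩ := hRS e2 e1
      have g3 : ¬ R e' g := fun h => g2 (Rt _ _ _ q2 h)
      have g4 : ¬ S e g := fun h => g1 (St _ _ _ s1 h)
      have q1 : ¬ R e1 e' := fun h => r12 (Rt _ _ _ h (Rs _ _ q2))
      have q3 : ¬ R e e' := fun h => r2 (Rt _ _ _ q2 (Rs _ _ h))
      -- choose f among e1, e not R-related to g
      obtain ⟨f, hf, f1, f2, f3, f4, f5, f6⟩ : ∃ f ∈ A, ¬ R f g ∧ ¬ S f g ∧ ¬ R f e' ∧ ¬ S f e' ∧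
          ¬ R f e2 ∧ ¬ S f e2 := by
        by_cases z : R e1 g
        · exact ⟨e, he, fun h => r1 (Rt _ _ _ z (Rs _ _ h)), g4, q3, t3, fun h => r2 (Rs _ _ h),
            fun h => s2 (Ss _ _ h)⟩
        · exact ⟨e1, h1, z, g1, q1, t1, r12, s12⟩
      by_cases z : S e' g
      · have : ¬ S e2 g := fun h => t2 (St _ _ _ h (Ss _ _ z))
        exact ⟨f, hf, e2, h2, g, hg, f5, g2, f1, f6, this, f2⟩
      · exact ⟨f, hf, e', he', g, hg, f3, g3, f1, f4, z, f2⟩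
    · by_cases q3 : R e e'
      · have q1 : ¬ R e1 e' := fun h => r1 (Rt _ _ _ h (Rs _ _ q3))
        exact ⟨e1, h1, e2, h2, e', he', r12, q2, q1, s12, t2, t1⟩
      · exact ⟨e, he, e2, h2, e', he', fun h => r2 (Rs _ _ h), q2, q3, fun h => s2 (Ss _ _ h), t2, t3⟩
  obtain ⟨e1, h1, -⟩ := hRR x x
  obtain ⟨e2, h2, r12, s12⟩ := hRS e1 e1
  obtain ⟨e, he, r1, r2⟩ := hRR e1 e2
  by_cases s1 : S e1 e
  · exact main e1 h1 e2 h2 e he r12 s12 r1 r2 s1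
  by_cases s2 : S e2 e
  · exact main e2 h2 e1 h1 e he (fun h => r12 (Rs _ _ h)) (fun h => s12 (Ss _ _ h)) r2 r1 s2
  exact ⟨e1, h1, e2, h2, e, he, r12, r2, r1, s12, s2, s1⟩

theorem span_ind {X : Type*} {med : X → X → X → X} {A : Set X} {x : X} (hx : x ∈ medSpan med A)
    (C : Set X) (hA : A ⊆ C) (hC : ∀ a ∈ C, ∀ b ∈ C, ∀ c ∈ C, med a b c ∈ C) : x ∈ C :=
  hx C ⟨hA, hC⟩

theorem subset_MSet {X : Type*} (M : MedianAlgebra X) (A : Set X) : A ⊆ MSet M.med A :=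
  fun a ha => ⟨a, ha, a, ha, a, ha, M.absorb a a⟩

theorem iter_sub {X : Type*} (M : MedianAlgebra X) (A : Set X) (k : ℕ) :
    (MSet M.med)^[k] A ⊆ medSpan M.med A := by
  induction k with
  | zero => exact fun a ha S hS => hS.1 ha
  | succ k ih =>
    rw [Function.iterate_succ_apply']
    rintro _ ⟨a, ha, b, hb, c, hc, rfl⟩ S hS
    exact hS.2 a (ih ha S hS) b (ih hb S hS) c (ih hc S hS)

theorem pair {X : Type*} (M : MedianAlgebra X) {d : ℕ}
    {T : Fin d → Type*} (alg : ∀ i, MedianAlgebra (T i))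
    (hrank : ∀ i, Rank1 (alg i))
    (f : X → ∀ i, T i)
    (hmed : ∀ x y z i, f (M.med x y z) i = (alg i).med (f x i) (f y i) (f z i))
    (A : Set X) {x : X} (hx : x ∈ medSpan M.med A) (i j : Fin d) :
    ∃ y ∈ MSet M.med A, f y i = f x i ∧ f y j = f x j := by
  let R : Fin d → X → X → Prop := fun i a b => ¬ Bt (alg i) (f a i) (f x i) (f b i)
  have Rs : ∀ i a b, R i a b → R i b a := fun i a b h h' => h h'.symm
  have Rt : ∀ i a b c, R i a b → R i b c → R i a c := fun i a b c h h' =>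
    rel_trans (alg i) (hrank i) h h'
  have Rc : ∀ i p a b c, R i p a → R i p b → R i p (M.med a b c) := by
    intro i p a b c h h'
    have := rel_conv (alg i) (hrank i) (f c i) h h'
    show ¬ _
    rw [hmed]; exact this
  have av : ∀ i j p q, ∃ b ∈ A, ¬ R i p b ∧ ¬ R j q b := by
    intro i j p q
    by_contra hcon
    push Not at hcon
    have : x ∈ {y | R i p y ∨ R j q y} := by
      refine span_ind hx _ (fun b hb => ?_) ?_
      · by_cases h : R i p b
        · exact Or.inl h
        · exact Or.inr (hcon b hb h)
      · intro a ha b hb c hc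
        have e1 : M.med a b c = M.med b c a := M.rot a b c
        have e2 : M.med a b c = M.med a c b := s23 M a b c
        have e3 : ∀ i p, R i p b → R i p c → R i p (M.med a b c) := fun i p h h' => by
          rw [e1]; exact Rc i p b c a h h'
        have e4 : ∀ i p, R i p a → R i p c → R i p (M.med a b c) := fun i p h h' => by
          rw [e2]; exact Rc i p a c b h h'
        rcases ha with ha | ha <;> rcases hb with hb | hb
        · exact Or.inl (Rc i p a b c ha hb)
        · rcases hc with hc | hc
          · exact Or.inl (e4 i p ha hc)
          · exact Or.inr (e3 j q hb hc)
        · rcases hc with hc | hc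
          · exact Or.inl (e3 i p hb hc)
          · exact Or.inr (e4 j q ha hc)
        · exact Or.inr (Rc j q a b c ha hb)
    rcases this with h | h
    · exact h (bt_right _ _ _)
    · exact h (bt_right _ _ _)
  obtain ⟨a, ha, b, hb, c, hc, r1, r2, r3, s1, s2, s3⟩ :=
    konig A (R i) (R j) (Rs i) (Rs j) (Rt i) (Rt j) (av i i) (av j j) (av i j) x
  simp only [R, not_not] at r1 r2 r3 s1 s2 s3
  refine ⟨_, ⟨a, ha, b, hb, c, hc, rfl⟩, ?_, ?_⟩
  · rw [hmed]; exact med_unique _ r1 r2 r3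
  · rw [hmed]; exact med_unique _ s1 s2 s3

theorem interp {X : Type*} (M : MedianAlgebra X) {d : ℕ}
    {T : Fin d → Type*} (alg : ∀ i, MedianAlgebra (T i))
    (hrank : ∀ i, Rank1 (alg i))
    (f : X → ∀ i, T i)
    (hmed : ∀ x y z i, f (M.med x y z) i = (alg i).med (f x i) (f y i) (f z i))
    (A : Set X) {x : X} (hx : x ∈ medSpan M.med A) (k : ℕ) :
    ∀ S : Finset (Fin d), S.card ≤ k + 2 →
      ∃ y ∈ (MSet M.med)^[k + 1] A, ∀ i ∈ S, f y i = f x i := by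
  induction k with
  | zero =>
    intro S hS
    rcases S.eq_empty_or_nonempty with rfl | ⟨i, hi⟩
    · have : A.Nonempty := by
        by_contra hne
        rw [Set.not_nonempty_iff_eq_empty] at hne
        exact span_ind hx ∅ (by rw [hne]) (by simp)
      obtain ⟨a, ha⟩ := this
      exact ⟨a, subset_MSet M A ha, by simp⟩
    · have h1 : (S.erase i).card ≤ 1 := by
        rw [Finset.card_erase_of_mem hi]; omega
      have : ∃ j, ∀ t ∈ S, t = i ∨ t = j := by
        rcases (S.erase i).eq_empty_or_nonempty with h | ⟨j, hj⟩
        · refine ⟨i, fun t ht => ?_⟩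
          by_contra hn
          have : t ∈ S.erase i := Finset.mem_erase.2 ⟨by tauto, ht⟩
          simp [h] at this
        · refine ⟨j, fun t ht => ?_⟩
          by_cases hn : t = i
          · exact Or.inl hn
          · exact Or.inr (Finset.card_le_one.1 h1 t (Finset.mem_erase.2 ⟨hn, ht⟩) j hj)
      obtain ⟨j, hj⟩ := this
      obtain ⟨y, hy, e1, e2⟩ := pair M alg hrank f hmed A hx i j
      refine ⟨y, hy, fun t ht => ?_⟩
      rcases hj t ht with rfl | rfl
      · exact e1
      · exact e2
  | succ k ih =>
    intro S hS
    rw [Function.iterate_succ_apply']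
    by_cases hc : S.card ≤ k + 2
    · obtain ⟨y, hy, h⟩ := ih S hc
      exact ⟨y, subset_MSet M _ hy, h⟩
    · obtain ⟨s1, s2, s3, m1, m2, m3, n12, n13, n23⟩ := Finset.two_lt_card_iff.1 (show 2 < S.card by omega)
      have er : ∀ s ∈ S, ∃ y ∈ (MSet M.med)^[k + 1] A, ∀ i ∈ S.erase s, f y i = f x i := by
        intro s hs
        apply ih
        rw [Finset.card_erase_of_mem hs]; omega
      obtain ⟨y1, hy1, g1⟩ := er s1 m1
      obtain ⟨y2, hy2, g2⟩ := er s2 m2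
      obtain ⟨y3, hy3, g3⟩ := er s3 m3
      refine ⟨_, ⟨y1, hy1, y2, hy2, y3, hy3, rfl⟩, fun i hi => ?_⟩
      rw [hmed]
      by_cases z1 : i = s1
      · rw [g2 i (Finset.mem_erase.2 ⟨by rw [z1]; exact n12, hi⟩),
          g3 i (Finset.mem_erase.2 ⟨by rw [z1]; exact n13, hi⟩), (alg i).rot, (alg i).absorb]
      · rw [g1 i (Finset.mem_erase.2 ⟨z1, hi⟩)]
        by_cases z2 : i = s2
        · rw [g3 i (Finset.mem_erase.2 ⟨by rw [z2]; exact n23, hi⟩), s23, (alg i).absorb]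
        · rw [g2 i (Finset.mem_erase.2 ⟨z2, hi⟩), (alg i).absorb]

theorem bound (d : ℕ) : d ≤ 2 ^ 2 ^ (d * (d - 1) / 2) + 2 := by
  have h1 : d * (d - 1) / 2 < 2 ^ (d * (d - 1) / 2) := Nat.lt_two_pow_self
  have h2 : 2 ^ (d * (d - 1) / 2) < 2 ^ 2 ^ (d * (d - 1) / 2) := Nat.lt_two_pow_self
  have h3 : d ≤ d * (d - 1) / 2 + 2 := by
    rcases d with _ | _ | d
    · simp
    · simp
    · have : d ≤ (d + 1 + 1) * (d + 1 + 1 - 1) / 2 := by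
        rw [Nat.le_div_iff_mul_le (by norm_num)]
        simp only [Nat.add_sub_cancel]
        nlinarith
      omega
  omega

end MA8

/-- if a median algebra `M` admits an injective median morphism
into a product of `d` rank-1 median algebras, then for every subset `A`,
`⟨A⟩ = ℳ^[g(d)](A)` with `g(d) = 1 + 2^(2^(d(d-1)/2))`. -/
theorem stmt8 {X : Type*} (M : MedianAlgebra X) (d : ℕ)
    {T : Fin d → Type*} (alg : ∀ i, MedianAlgebra (T i))
    (hrank : ∀ i, Rank1 (alg i))
    (f : X → ∀ i, T i) (hinj : Function.Injective f)
    (hmed : ∀ x y z i, f (M.med x y z) i = (alg i).med (f x i) (f y i) (f z i))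
    (A : Set X) :
    medSpan M.med A = (MSet M.med)^[1 + 2 ^ 2 ^ (d * (d - 1) / 2)] A := by
  apply Set.Subset.antisymm
  · intro x hx
    rw [Nat.add_comm]
    obtain ⟨y, hy, h⟩ := MA8.interp M alg hrank f hmed A hx (2 ^ 2 ^ (d * (d - 1) / 2))
      Finset.univ (by rw [Finset.card_univ, Fintype.card_fin]; exact MA8.bound d)
    have : y = x := hinj (funext fun i => h i (Finset.mem_univ i))
    exact this ▸ hy
  · exact MA8.iter_sub M A _
end

section
/- There exists a function h: ℕ → ℕ (one may take h(r) = r·g(r) + r with g(r) = 1 + 2^{2^{r(r−1)/2}}) such that for every median algebra M of rank at most r and every subset A ⊆ M, the median subalgebra generated by A satisfies ⟨A⟩ = ℳ^{h(r)}(A). -/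
namespace MedianAlgebra

/-- betweenness -/
def bt {X : Type*} (M : MedianAlgebra X) (a z b : X) : Prop := M.med a z b = z

variable {X : Type*} (M : MedianAlgebra X)

theorem rot2 (a b c : X) : M.med a b c = M.med c a b := by rw [M.rot c a b]

theorem swap2 (a b c : X) : M.med a b c = M.med a c b := by
  rw [M.rot a b c, M.rot a c b, M.swap b c a, M.rot c b a, M.swap b a c, M.rot a b c, M.swap b c a]

variable {M}

theorem bt.symm {a z b : X} (h : M.bt a z b) : M.bt b z a := by
  unfold bt at *
  rw [M.rot, M.swap]; exact h

theorem bt.trans {a z b c : X} (h : M.bt a z b) (h' : M.bt a b c) : M.bt a z c := by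
  unfold bt at *
  rw [M.swap] at *
  rw [← h, M.assoc, h']

theorem glb {a z b c : X} (h : M.bt a z b) (h' : M.bt a z c) : M.bt a z (M.med a b c) := by
  unfold bt at *
  rw [M.swap] at h h' ⊢
  rw [M.swap a b c, ← M.assoc, h, h']

theorem bt_self {a z : X} (h : M.bt a z a) : z = a := by
  unfold bt at h
  rw [← h, M.swap2, M.absorb]

theorem bt_left (a b : X) : M.bt a a b := M.absorb a b

theorem bt_right (a b : X) : M.bt a b b := (bt_left b a).symm

theorem mb12 (a b c : X) : M.bt a (M.med a b c) b := by
  unfold bt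
  rw [M.swap2, M.swap a b (M.med a b c), M.swap a b c, ← M.assoc, M.swap2 b a b, M.absorb]

theorem mb13 (a b c : X) : M.bt a (M.med a b c) c := by
  rw [M.swap2]; exact mb12 a c b

theorem mb23 (a b c : X) : M.bt b (M.med a b c) c := by
  rw [M.rot]; exact mb12 b c a

theorem med_unique {a b c z : X} (h1 : M.bt a z b) (h2 : M.bt b z c) (h3 : M.bt a z c) :
    z = M.med a b c := by
  have e1 : M.bt a z (M.med a b c) := glb h1 h3
  have e2 : M.bt b z (M.med a b c) := by
    have := glb h1.symm h2
    rwa [M.swap b a c] at this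
  have := glb e1.symm e2.symm
  have hm : M.med (M.med a b c) a b = M.med a b c := by
    have := mb12 (M := M) a b c
    unfold bt at this
    rwa [M.swap]
  rw [hm] at this
  exact bt_self this

theorem bt_mid {a z b c : X} (h : M.bt a z b) (h' : M.bt a b c) : M.bt z b c := by
  have w1 : M.bt z (M.med z b c) b := mb12 z b c
  have w2 : M.bt b (M.med z b c) c := mb23 z b c
  have h1 : M.bt b (M.med z b c) a := w1.symm.trans h.symm
  have h2 : M.bt c (M.med z b c) a := w2.symm.trans h'.symm
  have := med_unique h1.symm w2 h2.symm
  unfold bt at *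
  rw [this, h']

theorem bt_anti {a b c : X} (h : M.bt a b c) (h' : M.bt b a c) : a = b := by
  unfold bt at *
  rw [← h, M.swap, h']

/-- square lemma -/
theorem square {x y s t z : X} (hx : M.bt s x t)
    (hy : M.bt s y t) (hz : M.bt x z y) : M.bt s z t := by
  set w := M.med s t z with hw
  have k2 : ∀ u, M.bt s u t → M.bt (M.med z s u) w z := by
    intro u hu
    have e : M.med w s u = M.med z s u := by
      rw [hw, M.swap s t z, M.rot t s z, M.swap s z t, M.assoc]
      congr 1
      unfold bt at hu
      rw [M.rot, hu]
    have a1 : M.bt s (M.med z s u) w := by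
      rw [← e]; exact (mb12 w s u).symm
    exact bt_mid a1 (mb13 s t z)
  have p1 := (k2 x hx).symm
  have p2 := (k2 y hy).symm
  have g := glb p1 p2
  have hzz : M.bt (M.med z s x) z (M.med z s y) := by
    have b1 : M.bt x (M.med z s x) z := (mb13 z s x).symm
    have b2 : M.bt y (M.med z s y) z := (mb13 z s y).symm
    have c1 : M.bt (M.med z s x) z y := bt_mid b1 hz
    exact (bt_mid b2 c1.symm).symm
  have hm : M.med z (M.med z s x) (M.med z s y) = z := by
    rw [M.swap]; exact hzz
  rw [hm] at g
  have := bt_self g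
  unfold bt
  rw [M.swap2, ← hw, this]

theorem interval_convex {a b x y z : X} (hx : M.bt a x b) (hy : M.bt a y b) (hz : M.bt x z y) :
    M.bt a z b := by
  set s := M.med a x y with hs
  set t := M.med b x y with ht
  have sx : M.bt a s x := mb12 a x y
  have sy : M.bt a s y := mb13 a x y
  have tx : M.bt b t x := mb12 b x y
  have ty : M.bt b t y := mb13 b x y
  have xt : M.bt a x t := (bt_mid tx hx.symm).symm
  have yt : M.bt a y t := (bt_mid ty hy.symm).symm
  have tb : M.bt a t b := (tx.trans hx.symm).symm
  have st : M.bt a s t := sx.trans xt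
  have h1 : M.bt s x t := bt_mid sx xt
  have h2 : M.bt s y t := bt_mid sy yt
  have := square h1 h2 hz
  exact ((this.symm.trans st.symm).symm).trans tb

theorem gate {a b u : X} (z : X) (hu : M.bt a u b) : M.bt z (M.med a b z) u := by
  set g := M.med a b z with hg
  set v := M.med g u z with hv
  have gab : M.bt a g b := mb12 a b z
  have vab : M.bt a v b := interval_convex gab hu (mb12 g u z)
  have vg : M.bt z v g := (mb13 g u z).symm
  have ga : M.bt z g a := (mb13 a b z).symm
  have gb : M.bt z g b := (mb23 a b z).symm
  have h1 : M.bt v g a := bt_mid vg ga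
  have h2 : M.bt v g b := bt_mid vg gb
  have h3 := med_unique gab h2.symm h1.symm
  have : g = v := by
    rw [h3, M.swap2]; exact vab
  rw [this]
  exact (mb23 g u z).symm

theorem proj_bt {a b c d z : X} (hz : M.bt c z d) :
    M.bt (M.med a b c) (M.med a b z) (M.med a b d) := by
  set c' := M.med a b c with hc
  set d' := M.med a b d with hd
  set g := M.med a b z with hg
  set u := M.med c' d' g with hu
  have cab : M.bt a c' b := mb12 a b c
  have dab : M.bt a d' b := mb12 a b d
  have gab : M.bt a g b := mb12 a b z
  have uab : M.bt a u b := interval_convex cab dab (mb12 c' d' g)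
  have main : ∀ e, M.bt (M.med a b e) u g → M.bt e u g := by
    intro e he
    set k := M.med u e g with hk
    have kab : M.bt a k b := interval_convex uab gab (mb13 u e g)
    have q1 : M.bt e (M.med a b e) k := gate e kab
    have q2 : M.bt e k u := (mb12 u e g).symm
    have q3 : M.bt e k g := mb23 u e g
    have r1 : M.bt (M.med a b e) k u := bt_mid q1 q2
    have r2 : M.bt (M.med a b e) k g := bt_mid q1 q3
    have : k = M.med (M.med a b e) u g := med_unique r1 (mb13 u e g) r2
    have ku : k = u := by rw [this]; exact he
    rw [← ku]; exact q3
  have uc : M.bt c u g := main c (mb13 c' d' g)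
  have ud : M.bt d u g := main d (mb23 c' d' g)
  have un := glb uc.symm ud.symm
  have hn : M.bt g (M.med c d g) z := gate g hz
  rw [M.rot g c d] at un
  have u1 : M.bt g u z := un.trans hn
  have u2 : M.bt u g z := (gate z uab).symm
  have : g = u := bt_anti u1 u2
  unfold bt
  rw [M.swap2, ← hu, ← this]

theorem proj_med (a b c d e : X) : M.med a b (M.med c d e) =
    M.med (M.med a b c) (M.med a b d) (M.med a b e) :=
  med_unique (proj_bt (mb12 c d e)) (proj_bt (mb23 c d e)) (proj_bt (mb13 c d e))

theorem convex_bt {C : Set X} (hC : IsConvexSet M.med C) {a b z : X} (ha : a ∈ C) (hb : b ∈ C)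
    (h : M.bt a z b) : z ∈ C := by
  have := hC a ha b hb z
  rw [M.swap2] at this
  unfold bt at h
  rwa [h] at this

theorem join_convex {C : Set X} (hC : IsConvexSet M.med C) (a : X) :
    IsConvexSet M.med {z | ∃ h ∈ C, M.bt a z h} := by
  rintro x ⟨h1, hh1, hx⟩ y ⟨h2, hh2, hy⟩ z
  set w := M.med x y z with hw
  refine ⟨M.med h1 h2 w, hC _ hh1 _ hh2 _, ?_⟩
  have wxy : M.bt x w y := mb12 x y z
  have p1 : M.bt (M.med a w a) (M.med a w x) (M.med a w h1) := proj_bt hx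
  have p2 : M.bt (M.med a w a) (M.med a w y) (M.med a w h2) := proj_bt hy
  have p3 : M.bt (M.med a w x) (M.med a w w) (M.med a w y) := proj_bt wxy
  have e1 : M.med a w a = a := bt_left (M := M) a w |> fun h => by rw [M.swap2]; exact h
  have e2 : M.med a w w = w := bt_right (M := M) a w
  rw [e1] at p1 p2
  rw [e2] at p3
  have q1 : M.bt (M.med a w x) (M.med a w h1) w := bt_mid p1 (mb12 a w h1)
  have q2 : M.bt (M.med a w y) (M.med a w h2) w := bt_mid p2 (mb12 a w h2)
  unfold bt
  rw [proj_med, e2]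
  set A := M.med a w h1
  set B := M.med a w h2
  have n1 : M.bt w (M.med A B w) (M.med a w x) := (mb13 A B w).symm.trans q1.symm
  have n2 : M.bt w (M.med A B w) (M.med a w y) := (mb23 A B w).symm.trans q2.symm
  have := glb n1 n2
  rw [M.swap w] at this
  unfold bt at p3
  rw [p3] at this
  exact bt_self this

theorem separation {p a : X} (hne : a ≠ p) : ∃ h, IsHalfspace M.med h ∧ a ∈ h ∧ p ∉ h := by
  obtain ⟨H, haH, hH⟩ := zorn_subset_nonempty {C : Set X | IsConvexSet M.med C ∧ p ∉ C} (by
    intro c hc hch hne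
    refine ⟨⋃₀ c, ⟨?_, ?_⟩, fun s hs => Set.subset_sUnion_of_mem hs⟩
    · rintro x ⟨s, hs, hx⟩ y ⟨t, ht, hy⟩ z
      rcases hch.total hs ht with h | h
      · exact ⟨t, ht, (hc ht).1 x (h hx) y hy z⟩
      · exact ⟨s, hs, (hc hs).1 x hx y (h hy) z⟩
    · rintro ⟨s, hs, hx⟩
      exact (hc hs).2 hx) {a} ⟨by
        rintro x rfl y rfl z
        exact M.absorb _ _, by simpa using hne.symm⟩
  have haH' : a ∈ H := haH rfl
  obtain ⟨⟨hconv, hpH⟩, hmax⟩ := hH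
  have ext : ∀ x, x ∉ H → ∃ h ∈ H, M.bt x p h := by
    intro x hx
    by_contra hcon
    have := hmax (y := {z | ∃ h ∈ H, M.bt x z h}) ⟨join_convex hconv x, hcon⟩
      (fun z hz => ⟨z, hz, bt_right x z⟩)
    exact hx (this ⟨a, haH', bt_left x a⟩)
  refine ⟨H, ⟨⟨a, haH'⟩, ⟨p, hpH⟩, hconv, ?_⟩, haH', hpH⟩
  intro x hx y hy v hz
  obtain ⟨h1, hh1, b1⟩ := ext x hx
  obtain ⟨h2, hh2, b2⟩ := ext y hy
  set z := M.med x y v with hzd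
  have zxy : M.bt x z y := mb12 x y v
  set q0 := M.med z h1 p with hq0
  set q := M.med q0 h2 p with hq
  have q0H : q0 ∈ H := hconv _ hz _ hh1 _
  have qH : q ∈ H := hconv _ q0H _ hh2 _
  have qq0 : M.bt p q q0 := (mb13 q0 h2 p).symm
  have qh2 : M.bt p q h2 := (mb23 q0 h2 p).symm
  have qh1 : M.bt p q h1 := qq0.trans (mb23 z h1 p).symm
  have qz : M.bt p q z := qq0.trans (mb13 z h1 p).symm
  have aux : ∀ x' h, M.bt x' p h → M.bt p q h → M.bt q p x' :=
    fun x' h b c => bt_mid c.symm b.symm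
  have r1 := aux x h1 b1 qh1
  have r2 := aux y h2 b2 qh2
  have := glb r1 r2
  rw [M.rot] at this
  have s1 : M.bt q p z := this.trans (gate q zxy)
  exact hpH ((bt_anti s1 qz) ▸ qH)

end MedianAlgebra

namespace MedianAlgebra

variable {X : Type*} {M : MedianAlgebra X}

theorem hs_compl {h : Set X} (hh : IsHalfspace M.med h) : IsHalfspace M.med hᶜ :=
  ⟨hh.2.1, by rw [compl_compl]; exact hh.1, hh.2.2.2, by rw [compl_compl]; exact hh.2.2.1⟩

theorem med_mem_iff {h : Set X} (hh : IsHalfspace M.med h) (a b c : X) :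
    M.med a b c ∈ h ↔ (a ∈ h ∧ b ∈ h) ∨ (b ∈ h ∧ c ∈ h) ∨ (a ∈ h ∧ c ∈ h) := by
  have aux : ∀ k : Set X, IsConvexSet M.med k →
      (a ∈ k ∧ b ∈ k) ∨ (b ∈ k ∧ c ∈ k) ∨ (a ∈ k ∧ c ∈ k) → M.med a b c ∈ k := by
    rintro k hk (⟨h1, h2⟩ | ⟨h1, h2⟩ | ⟨h1, h2⟩)
    · exact hk a h1 b h2 c
    · rw [M.rot]; exact hk b h1 c h2 a
    · rw [M.swap2]; exact hk a h1 c h2 b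
  have h1 := aux h hh.2.2.1
  have h2 := aux hᶜ hh.2.2.2
  simp only [Set.mem_compl_iff] at h2
  tauto

theorem eq_of_hs {p q : X} (H : ∀ h, IsHalfspace M.med h → p ∈ h → q ∈ h) : p = q := by
  by_contra hne
  obtain ⟨h, hh, h1, h2⟩ := separation (M := M) hne
  exact h2 (H h hh h1)

theorem subset_MSet (A : Set X) : A ⊆ MSet M.med A :=
  fun a ha => ⟨a, ha, a, ha, a, ha, M.absorb a a⟩

theorem subset_iter (A : Set X) {m n : ℕ} (hmn : m ≤ n) :
    (MSet M.med)^[m] A ⊆ (MSet M.med)^[n] A := by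
  induction n, hmn using Nat.le_induction with
  | base => exact subset_rfl
  | succ n _ ih =>
    rw [Function.iterate_succ_apply']
    exact ih.trans (subset_MSet _)

theorem med_mem_iter {A : Set X} {n : ℕ} {a b c : X} (ha : a ∈ (MSet M.med)^[n] A)
    (hb : b ∈ (MSet M.med)^[n] A) (hc : c ∈ (MSet M.med)^[n] A) :
    M.med a b c ∈ (MSet M.med)^[n + 1] A := by
  rw [Function.iterate_succ_apply']
  exact ⟨a, ha, b, hb, c, hc, rfl⟩

theorem span_induction {A : Set X} {P : X → Prop} (h1 : ∀ a ∈ A, P a)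
    (h2 : ∀ a b c, P a → P b → P c → P (M.med a b c)) {p : X} (hp : p ∈ medSpan M.med A) : P p :=
  hp {z | P z} ⟨h1, fun a ha b hb c hc => h2 a b c ha hb hc⟩

theorem subset_span (A : Set X) : A ⊆ medSpan M.med A :=
  fun _ ha _ hS => hS.1 ha

theorem span_med {A : Set X} {a b c : X} (ha : a ∈ medSpan M.med A) (hb : b ∈ medSpan M.med A)
    (hc : c ∈ medSpan M.med A) : M.med a b c ∈ medSpan M.med A :=
  fun S hS => hS.2 a (ha S hS) b (hb S hS) c (hc S hS)

theorem iter_subset_span (A : Set X) (n : ℕ) : (MSet M.med)^[n] A ⊆ medSpan M.med A := by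
  induction n with
  | zero => exact subset_span A
  | succ n ih =>
    rw [Function.iterate_succ_apply']
    rintro _ ⟨a, ha, b, hb, c, hc, rfl⟩
    exact span_med (ih ha) (ih hb) (ih hc)

/-- Helly type reduction -/
theorem reduction {r : ℕ} (hr : RankLE M.med r) (x y : X) (F : Finset X) :
    ∃ G ⊆ F, G.card ≤ r ∧ ∀ h, IsHalfspace M.med h → x ∉ h → y ∈ h → (∀ f ∈ G, f ∈ h) →
      ∀ f ∈ F, f ∈ h := by
  classical
  let good : Finset X → Prop := fun G => ∀ h, IsHalfspace M.med h → x ∉ h → y ∈ h →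
    (∀ f ∈ G, f ∈ h) → ∀ f ∈ F, f ∈ h
  obtain ⟨G, hG, hmin⟩ := Finset.exists_min_image (F.powerset.filter good) Finset.card
    ⟨F, by simp [good]⟩
  simp only [Finset.mem_filter, Finset.mem_powerset] at hG hmin
  refine ⟨G, hG.1, ?_, hG.2⟩
  have irr : ∀ g : X, ∃ h, g ∈ G → (IsHalfspace M.med h ∧ x ∉ h ∧ y ∈ h ∧ g ∉ h ∧
      ∀ f ∈ G, f ≠ g → f ∈ h) := by
    intro g
    by_cases hg : g ∈ G
    swap
    · exact ⟨∅, fun h => absurd h hg⟩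
    have hng : ¬ good (G.erase g) := by
      intro hgood
      have := hmin (G.erase g) ⟨(Finset.erase_subset _ _).trans hG.1, hgood⟩
      have := Finset.card_erase_lt_of_mem hg
      omega
    simp only [good] at hng
    push Not at hng
    obtain ⟨h, hh, hx, hy, hf, f, hfF, hfh⟩ := hng
    refine ⟨h, fun _ => ⟨hh, hx, hy, fun hgh => hfh (hG.2 h hh hx hy ?_ f hfF), ?_⟩⟩
    · intro f' hf'
      by_cases e : f' = g
      · rwa [e]
      · exact hf f' (Finset.mem_erase.2 ⟨e, hf'⟩)
    · intro f' hf' e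
      exact hf f' (Finset.mem_erase.2 ⟨e, hf'⟩)
  choose k hk using irr
  have hinj : Set.InjOn k G := by
    intro a ha b hb hab
    by_contra hne
    have h1 := (hk a ha).2.2.2.1
    have h2 := (hk b hb).2.2.2.2 a ha hne
    rw [hab] at h1
    exact h1 h2
  rw [← Finset.card_image_of_injOn hinj]
  apply hr
  · intro h hh
    obtain ⟨g, hg, rfl⟩ := Finset.mem_image.1 hh
    exact (hk g hg).1
  · intro h hh h' hh' hne
    obtain ⟨g, hg, rfl⟩ := Finset.mem_image.1 hh
    obtain ⟨g', hg', rfl⟩ := Finset.mem_image.1 hh'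
    have e : g ≠ g' := fun e => hne (by rw [e])
    obtain ⟨-, a1, a2, a3, a4⟩ := hk g hg
    obtain ⟨-, b1, b2, b3, b4⟩ := hk g' hg'
    exact ⟨⟨y, a2, b2⟩, ⟨g', a4 g' hg' e.symm, b3⟩, ⟨g, a3, b4 g hg e⟩, ⟨x, a1, b1⟩⟩

/-- fold of meets -/
theorem fold {S : Set X} {x y : X} (hx : x ∈ S) (hy : y ∈ S) (F : Finset X) (hF : ↑F ⊆ S) :
    ∃ e ∈ (MSet M.med)^[F.card] S, (∀ h, IsHalfspace M.med h → x ∈ h → y ∈ h → e ∈ h) ∧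
      ∀ h, IsHalfspace M.med h → x ∉ h → y ∈ h → (e ∈ h ↔ ∀ f ∈ F, f ∈ h) := by
  classical
  induction F using Finset.induction_on with
  | empty => exact ⟨y, hy, fun _ _ _ h => h, by simp +contextual⟩
  | insert a F ha ih =>
    rw [Finset.coe_insert, Set.insert_subset_iff] at hF
    obtain ⟨e, he, h1, h2⟩ := ih hF.2
    rw [Finset.card_insert_of_notMem ha]
    refine ⟨M.med x e a, med_mem_iter (subset_iter S (Nat.zero_le _) hx) he
      (subset_iter S (Nat.zero_le _) hF.1), ?_, ?_⟩
    · intro h hh hxh hyh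
      rw [med_mem_iff hh]
      exact Or.inl ⟨hxh, h1 h hh hxh hyh⟩
    · intro h hh hxh hyh
      rw [med_mem_iff hh, Finset.forall_mem_insert, ← h2 h hh hxh hyh]
      tauto

theorem step {r : ℕ} (hr : RankLE M.med r) {A B : Set X} (hAB : A ⊆ B) {x y q : X}
    (hx : x ∈ B) (hy : y ∈ B) (hq : q ∈ medSpan M.med A)
    (hqI : ∀ h, IsHalfspace M.med h → x ∈ h → y ∈ h → q ∈ h) :
    q ∈ (MSet M.med)^[r + r] B := by
  classical
  let W : Type _ := {h : Set X // IsHalfspace M.med h ∧ x ∉ h ∧ y ∈ h}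
  let ι : X → Set W := fun z => {h | z ∈ h.1}
  have hι : ι q ∈ latticeClosure (ι '' A) := by
    refine span_induction (M := M) (P := fun z => ι z ∈ latticeClosure (ι '' A)) ?_ ?_ hq
    · intro a ha
      exact subset_latticeClosure ⟨a, ha, rfl⟩
    · intro a b c ha hb hc
      have e : ι (M.med a b c) = (ι a ⊓ ι b) ⊔ ((ι b ⊓ ι c) ⊔ (ι a ⊓ ι c)) := by
        ext h
        exact med_mem_iff h.2.1 a b c
      rw [e]
      have L := isSublattice_latticeClosure (s := ι '' A)
      exact L.supClosed (L.infClosed ha hb) (L.supClosed (L.infClosed hb hc) (L.infClosed ha hc))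
  rw [← supClosure_infClosure] at hι
  obtain ⟨T, hTne, hT, hTq⟩ := hι
  have meets : ∀ s : Set W, ∃ e, s ∈ T → (e ∈ (MSet M.med)^[r] B ∧ ι e = s ∧
      ∀ h, IsHalfspace M.med h → x ∈ h → y ∈ h → e ∈ h) := by
    intro s
    by_cases hs : s ∈ T
    swap
    · exact ⟨x, fun h => absurd h hs⟩
    obtain ⟨U, hUne, hU, hUs⟩ := hT hs
    obtain ⟨F, hFA, hFU⟩ := Finset.subset_set_image_iff.1 hU
    obtain ⟨G, hGF, hGc, hG⟩ := reduction hr x y F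
    obtain ⟨e, he, h1, h2⟩ := fold (M := M) hx hy G
      (fun g hg => hAB (hFA (hGF hg)))
    refine ⟨e, fun _ => ⟨subset_iter B hGc he, ?_, h1⟩⟩
    ext h
    have k1 : h ∈ s ↔ ∀ f ∈ F, f ∈ h.1 := by
      rw [← hUs, Finset.inf'_eq_inf, Finset.inf_set_eq_iInter]
      simp [← hFU, ι]
    rw [k1]
    have k2 := h2 h.1 h.2.1 h.2.2.1 h.2.2.2
    change e ∈ h.1 ↔ _
    rw [k2]
    exact ⟨hG h.1 h.2.1 h.2.2.1 h.2.2.2, fun k f hf => k f (hGF hf)⟩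
  choose c hc using meets
  obtain ⟨G, hGF, hGc, hG⟩ := reduction hr y x (T.image c)
  have hGB : ↑G ⊆ (MSet M.med)^[r] B := by
    intro g hg
    obtain ⟨s, hs, rfl⟩ := Finset.mem_image.1 (hGF hg)
    exact (hc s hs).1
  obtain ⟨e, he, h1, h2⟩ := fold (M := M) (subset_iter B (Nat.zero_le r) hy)
    (subset_iter B (Nat.zero_le r) hx) G hGB
  have main : ∀ h, IsHalfspace M.med h → x ∉ h → y ∈ h → (q ∈ h ↔ e ∈ h) := by
    intro h hh hxh hyh
    have k1 : q ∈ h ↔ ∃ s ∈ T, c s ∈ h := by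
      have k0 : q ∈ h ↔ (⟨h, hh, hxh, hyh⟩ : W) ∈ ι q := Iff.rfl
      rw [k0, ← hTq, Finset.sup'_eq_sup, Finset.sup_set_eq_biUnion]
      simp only [Set.mem_iUnion, id, exists_prop]
      refine exists_congr fun s => and_congr_right fun hs => ?_
      conv_lhs => rw [← (hc s hs).2.1]
      exact Iff.rfl
    have k2 := h2 hᶜ (hs_compl hh) (by simpa using hyh) hxh
    have k3 := hG hᶜ (hs_compl hh) (by simpa using hyh) hxh
    rw [k1, ← not_iff_not]
    rw [Set.mem_compl_iff] at k2
    rw [k2]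
    constructor
    · intro k g hg
      obtain ⟨s, hs, rfl⟩ := Finset.mem_image.1 (hGF hg)
      exact fun hcs => k ⟨s, hs, hcs⟩
    · rintro k ⟨s, hs, hcs⟩
      exact k3 k (c s) (Finset.mem_image_of_mem c hs) hcs
  have hqe : q = e := by
    apply eq_of_hs (M := M)
    intro h hh hqh
    by_cases hxh : x ∈ h <;> by_cases hyh : y ∈ h
    · exact h1 h hh hyh hxh
    · by_contra heh
      exact (main hᶜ (hs_compl hh) (by simpa using hxh) hyh).2 heh hqh
    · exact (main h hh hxh hyh).1 hqh
    · exact absurd hqh (hqI hᶜ (hs_compl hh) hxh hyh)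
  rw [hqe, Function.iterate_add_apply]
  exact subset_iter _ hGc he

theorem finite_hull {A : Set X} {p : X} (hp : p ∈ medSpan M.med A) :
    ∃ F : Finset X, ↑F ⊆ A ∧ ∀ h, IsHalfspace M.med h → (∀ f ∈ F, f ∈ h) → p ∈ h := by
  classical
  refine span_induction (M := M) (P := fun p => ∃ F : Finset X, ↑F ⊆ A ∧
    ∀ h, IsHalfspace M.med h → (∀ f ∈ F, f ∈ h) → p ∈ h) ?_ ?_ hp
  · intro a ha
    exact ⟨{a}, by simpa using ha, by simp⟩
  · rintro a b c ⟨F, hF, hF'⟩ ⟨G, hG, hG'⟩ -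
    refine ⟨F ∪ G, by simp [hF, hG], fun h hh hf => ?_⟩
    rw [med_mem_iff hh]
    exact Or.inl ⟨hF' h hh fun f hf' => hf f (Finset.mem_union_left _ hf'),
      hG' h hh fun f hf' => hf f (Finset.mem_union_right _ hf')⟩

theorem chain {r : ℕ} (hr : RankLE M.med r) {A : Set X} {p y : X} (hp : p ∈ medSpan M.med A)
    (hy : y ∈ A) (F : Finset X) (hF : ↑F ⊆ A) :
    ∃ e ∈ (MSet M.med)^[F.card * (r + r)] A,
      (∀ h, IsHalfspace M.med h → p ∈ h → y ∈ h → e ∈ h) ∧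
      ∀ h, IsHalfspace M.med h → p ∉ h → y ∈ h → (e ∈ h ↔ ∀ f ∈ F, f ∈ h) := by
  classical
  induction F using Finset.induction_on with
  | empty => exact ⟨y, by simpa using hy, fun _ _ _ h => h, by simp +contextual⟩
  | insert a F ha ih =>
    rw [Finset.coe_insert, Set.insert_subset_iff] at hF
    obtain ⟨e, he, h1, h2⟩ := ih hF.2
    rw [Finset.card_insert_of_notMem ha]
    refine ⟨M.med p e a, ?_, ?_, ?_⟩
    · rw [Nat.succ_mul, Nat.add_comm, Function.iterate_add_apply]
      refine step hr (A := A) (subset_iter A (Nat.zero_le _)) he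
        (subset_iter A (Nat.zero_le _) hF.1)
        (span_med hp (iter_subset_span _ _ he) (subset_span A hF.1)) ?_
      intro h hh h1 h2
      rw [med_mem_iff hh]
      exact Or.inr (Or.inl ⟨h1, h2⟩)
    · intro h hh hxh hyh
      rw [med_mem_iff hh]
      exact Or.inl ⟨hxh, h1 h hh hxh hyh⟩
    · intro h hh hxh hyh
      rw [med_mem_iff hh, Finset.forall_mem_insert, ← h2 h hh hxh hyh]
      tauto

theorem main_bound {r : ℕ} (hr : RankLE M.med r) {A : Set X} {p : X}
    (hp : p ∈ medSpan M.med A) : p ∈ (MSet M.med)^[r * (r + r)] A := by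
  have hA : A.Nonempty := by
    by_contra hA
    rw [Set.not_nonempty_iff_eq_empty] at hA
    subst hA
    exact hp ∅ ⟨subset_rfl, by simp⟩
  obtain ⟨y, hy⟩ := hA
  obtain ⟨F, hFA, hF⟩ := finite_hull hp
  obtain ⟨G, hGF, hGc, hG⟩ := reduction hr p y F
  obtain ⟨e, he, h1, h2⟩ := chain hr hp hy G (fun g hg => hFA (hGF hg))
  have : e = p := by
    apply eq_of_hs (M := M)
    intro h hh heh
    by_contra hph
    by_cases hyh : y ∈ h
    · exact hph (hF h hh (hG h hh hph hyh ((h2 h hh hph hyh).1 heh)))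
    · exact h1 hᶜ (hs_compl hh) hph hyh heh
  rw [← this]
  exact subset_iter A (Nat.mul_le_mul_right _ hGc) he

end MedianAlgebra

/-- with `h r = r * g r + r` where `g r = 1 + 2^(2^(r(r-1)/2))`,
every median algebra of rank at most `r` satisfies `⟨A⟩ = ℳ^[h r](A)` for
every subset `A`. -/
theorem stmt9 {X : Type*} (r : ℕ) (M : MedianAlgebra X) (hr : RankLE M.med r)
    (A : Set X) :
    medSpan M.med A =
      (MSet M.med)^[r * (1 + 2 ^ 2 ^ (r * (r - 1) / 2)) + r] A := by
  refine Set.Subset.antisymm (fun p hp => ?_) (MedianAlgebra.iter_subset_span A _)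
  refine MedianAlgebra.subset_iter A ?_ (MedianAlgebra.main_bound hr hp)
  have key : r + r ≤ 2 ^ 2 ^ (r * (r - 1) / 2) + 2 := by
    rcases r with _ | r
    · simp
    have h1 : r ≤ (r + 1) * (r + 1 - 1) / 2 := by
      rcases r with _ | r
      · simp
      rw [Nat.le_div_iff_mul_le (by norm_num)]
      simp only [Nat.add_sub_cancel]
      nlinarith
    have h2 : r + 1 ≤ 2 ^ r := Nat.lt_two_pow_self
    have h3 : 2 ^ r ≤ 2 ^ ((r + 1) * (r + 1 - 1) / 2) := Nat.pow_le_pow_right (by norm_num) h1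
    have h4 : 2 ^ (r + 1) ≤ 2 ^ 2 ^ ((r + 1) * (r + 1 - 1) / 2) :=
      Nat.pow_le_pow_right (by norm_num) (h2.trans h3)
    rw [pow_succ] at h4
    omega
  calc r * (r + r) ≤ r * (2 ^ 2 ^ (r * (r - 1) / 2) + 2) := Nat.mul_le_mul_left _ key
    _ = _ := by ring
end

section
/- Let X be a median space of finite rank r, and let A ⊆ X be an approximate median subalgebra, i.e., m(A×A×A) ⊆ N_R(A) for some R ≥ 0. Then the Hausdorff distance between A and the median subalgebra ⟨A⟩ generated by A is finite. -/
/-- `w` is a median point of `x, y, z` in a metric space. -/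
def IsMedianPoint {X : Type*} [MetricSpace X] (x y z w : X) : Prop :=
  dist x y = dist x w + dist w y ∧ dist x z = dist x w + dist w z ∧
    dist y z = dist y w + dist w z

/-- A median-space structure on a metric space: every triple admits a unique
median point. -/
structure MedianSpaceStruct (X : Type*) [MetricSpace X] where
  m : X → X → X → X
  isMedian : ∀ x y z, IsMedianPoint x y z (m x y z)
  unique : ∀ x y z w, IsMedianPoint x y z w → w = m x y z

namespace MedAux

variable {X : Type*} [MetricSpace X]

/-- Metric betweenness: `z` lies in the interval from `a` to `b`. -/
def Btw (a z b : X) : Prop := dist a b = dist a z + dist z b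

theorem Btw.symm {a z b : X} (h : Btw a z b) : Btw b z a := by
  unfold Btw at *
  rw [dist_comm b a, dist_comm b z, dist_comm z a]; linarith

/-- a - t - z - b : from `z ∈ [a,b]`, `t ∈ [a,z]` get `t ∈ [a,b]`. -/
theorem Btw.inner {a z b t : X} (h : Btw a z b) (h' : Btw a t z) : Btw a t b := by
  unfold Btw at *
  have h1 := dist_triangle a t b
  have h2 := dist_triangle t z b
  linarith

theorem Btw.tail {a z b t : X} (h : Btw a z b) (h' : Btw a t z) : Btw t z b := by
  unfold Btw at *
  have h1 := dist_triangle a t b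
  have h2 := dist_triangle t z b
  linarith

theorem Btw.eq {a z b : X} (h : Btw a z b) (h' : Btw z a b) : a = z := by
  unfold Btw at *
  rw [dist_comm z a] at h'
  have : dist a z = 0 := by linarith
  exact dist_eq_zero.mp this

variable (M : MedianSpaceStruct X)

theorem b12 (x y z : X) : Btw x (M.m x y z) y := (M.isMedian x y z).1
theorem b13 (x y z : X) : Btw x (M.m x y z) z := (M.isMedian x y z).2.1
theorem b23 (x y z : X) : Btw y (M.m x y z) z := (M.isMedian x y z).2.2

theorem uniq {x y z w : X} (h1 : Btw x w y) (h2 : Btw x w z) (h3 : Btw y w z) :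
    w = M.m x y z := M.unique x y z w ⟨h1, h2, h3⟩

theorem swap12 (x y z : X) : M.m x y z = M.m y x z :=
  uniq M (b12 M x y z).symm (b23 M x y z) (b13 M x y z)

theorem swap23 (x y z : X) : M.m x y z = M.m x z y :=
  uniq M (b13 M x y z) (b12 M x y z) (b23 M x y z).symm

theorem absorb (x y : X) : M.m x x y = x := by
  symm; apply uniq <;> simp [Btw]

theorem absorb' (x y : X) : M.m x y x = x := by rw [swap23, absorb]
theorem absorb'' (x y : X) : M.m y x x = x := by rw [swap12, absorb']

theorem gate {a b t : X} (z : X) (ht : Btw a t b) : Btw z (M.m a b z) t := by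
  have s1a : Btw z (M.m z t a) t := b12 M z t a
  have s1b : Btw z (M.m z t a) a := b13 M z t a
  have s1c : Btw t (M.m z t a) a := b23 M z t a
  have s2a : Btw z (M.m z t b) t := b12 M z t b
  have s2b : Btw z (M.m z t b) b := b13 M z t b
  have s2c : Btw t (M.m z t b) b := b23 M z t b
  set s1 := M.m z t a
  set s2 := M.m z t b
  have n1 := b12 M z s1 s2
  have n2 := b13 M z s1 s2
  have n3 := b23 M z s1 s2
  set n := M.m z s1 s2
  have e1 : Btw z n a := s1b.inner n1
  have e2 : Btw z n b := s2b.inner n2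
  -- chain a s1 t s2 b
  have c1 : Btw s1 t b := ht.tail s1c.symm
  have c2 : Btw a s1 b := ht.inner s1c.symm
  have c3 : Btw s1 s2 b := (c1.symm.inner s2c.symm).symm
  have c4 : Btw s1 n b := c3.inner n3
  have c5 : Btw a n b := (c2.symm.inner c4.symm).symm
  have : n = M.m a b z := uniq M c5 e1.symm e2.symm
  rw [← this]
  exact s1a.inner n1

theorem conv (M : MedianSpaceStruct X) {a b u v z : X} (hu : Btw a u b) (hv : Btw a v b) (hz : Btw u z v) :
    Btw a z b := by
  have h1 := gate M z hu
  have h2 := gate M z hv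
  have h3 := b12 M a b z
  set p := M.m a b z
  have : z = p := by
    unfold Btw at h1 h2 hz
    have := dist_triangle u p v
    rw [dist_comm z u, dist_comm p u] at h1
    have h0 : dist z p = 0 := by
      have := dist_nonneg (x := z) (y := p)
      linarith
    exact dist_eq_zero.mp h0
  rw [this]; exact h3

theorem hconv (M : MedianSpaceStruct X) {p y u v w : X} (hu : Btw p y u) (hv : Btw p y v) (hw : Btw u w v) :
    Btw p y w := by
  have n1 := b12 M p y w
  have n2 := b13 M p y w
  have n3 := b23 M p y w
  set n := M.m p y w
  have yu : Btw n y u := hu.tail n1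
  have yv : Btw n y v := hv.tail n1
  have g1 := b12 M u v y
  have g2 := b13 M u v y
  have g3 := b23 M u v y
  set g := M.m u v y with hg
  have e1 : Btw u g n := yu.symm.inner g2
  have e2 : Btw v g n := yv.symm.inner g3
  have e : g = M.m u v n := uniq M g1 e1 e2
  have f1 : Btw n g w := by rw [e]; exact gate M n hw
  have f3 : Btw n y g := (yu.symm.tail g2).symm
  have f4 : Btw n y w := f1.inner f3
  have : n = y := f4.eq n3
  rw [← this]; exact n2

theorem proj_btw {a b c d z : X} (hz : Btw c z d) :
    Btw (M.m a b c) (M.m a b z) (M.m a b d) := by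
  have pc := b12 M a b c
  have pd := b12 M a b d
  have pz := b12 M a b z
  have gc := gate M c pz
  have gd := gate M d pz
  have gz := fun t (h : Btw a t b) => gate M z h
  set πc := M.m a b c
  set πd := M.m a b d
  set p := M.m a b z
  have n1 := b12 M πc πd p
  have n2 := b13 M πc πd p
  have n3 := b23 M πc πd p
  set n := M.m πc πd p
  have h1 : Btw p n c := gc.symm.inner n2.symm
  have h2 : Btw p n d := gd.symm.inner n3.symm
  have h3 : Btw p n z := hconv M h1 h2 hz
  have h4 : Btw z p n := gz n (conv M pc pd n1)
  have : p = n := h3.eq h4.symm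
  rw [this]; exact n1

theorem distrib (a b c d e : X) :
    M.m a b (M.m c d e) = M.m (M.m a b c) (M.m a b d) e := by
  apply uniq
  · exact proj_btw M (b12 M c d e)
  · have h := proj_btw M (a := a) (b := b) (b13 M c d e)
    exact (gate M e (b12 M a b c)).symm.inner h
  · have h := proj_btw M (a := a) (b := b) (b23 M c d e)
    exact (gate M e (b12 M a b d)).symm.inner h

theorem gate_lip (a b x y : X) : dist (M.m a b x) (M.m a b y) ≤ dist x y := by
  have h1 := gate M x (b12 M a b y)
  have h2 := gate M y (b12 M a b x)
  unfold Btw at h1 h2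
  have h3 := dist_triangle x y (M.m a b y)
  have h4 := dist_triangle y x (M.m a b x)
  rw [dist_comm y x] at h4
  rw [dist_comm (M.m a b y) (M.m a b x)] at h2
  linarith

theorem lip (a b c a' b' c' : X) :
    dist (M.m a b c) (M.m a' b' c') ≤ dist a a' + dist b b' + dist c c' := by
  have h1 := gate_lip M a b c c'
  have h2 : dist (M.m a b c') (M.m a b' c') ≤ dist b b' := by
    rw [swap23 M a b, swap23 M a b']; exact gate_lip M a c' b b'
  have h3 : dist (M.m a b' c') (M.m a' b' c') ≤ dist a a' := by
    rw [swap12 M a, swap12 M a', swap23 M b' a, swap23 M b' a']; exact gate_lip M b' c' a a'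
  have h4 := dist_triangle (M.m a b c) (M.m a b c') (M.m a' b' c')
  have h5 := dist_triangle (M.m a b c') (M.m a b' c') (M.m a' b' c')
  linarith

/-- monotonicity: if `a ≤ c` seen from `u` then `m a b x ≤ m c b x`. -/
theorem mono1 {u a c : X} (b x : X) (h : M.m u c a = a) :
    M.m u (M.m b x c) (M.m b x a) = M.m b x a := by
  have := distrib M b x c a u
  rw [swap23 M c a u, swap12 M c u a, h] at this
  rw [swap12 M u, swap23 M _ u]
  exact this.symm

theorem le_trans' {u p q r : X} (h1 : M.m u q p = p) (h2 : M.m u r q = q) :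
    M.m u r p = p := by
  have := distrib M u r u q p
  rw [absorb' M, h2, h1] at this
  exact this

/-- The join of a convex set and a point is convex. -/
theorem join_convex {C : Set X} (hC : IsConvexSet M.m C) (u : X) :
    IsConvexSet M.m {z | ∃ c ∈ C, M.m u c z = z} := by
  rintro a ⟨c, hc, ha⟩ b ⟨c', hc', hb⟩ x
  refine ⟨M.m c c' x, hC c hc c' hc' x, ?_⟩
  have h1 := mono1 M b x ha
  have h2 := mono1 M c x hb
  -- m b x a ≤ m b x c ; m c x b ≤ m c x c'
  have e1 : M.m b x a = M.m a b x := by rw [swap23, swap12]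
  have e2 : M.m b x c = M.m c x b := by rw [swap23, swap12, swap23]
  have e3 : M.m c x c' = M.m c c' x := by rw [swap23]
  rw [e1, e2] at h1
  rw [e3] at h2
  exact le_trans' M h1 h2

theorem separate {x y : X} (hxy : x ≠ y) :
    ∃ h : Set X, IsHalfspace M.m h ∧ x ∈ h ∧ y ∉ h := by
  obtain ⟨C, hxC, hC⟩ := zorn_subset_nonempty
    {C : Set X | IsConvexSet M.m C ∧ x ∈ C ∧ y ∉ C} (by
      intro c hc hchain hne
      refine ⟨⋃₀ c, ⟨?_, ?_, ?_⟩, fun s hs => Set.subset_sUnion_of_mem hs⟩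
      · rintro a ⟨s, hs, has⟩ b ⟨t, ht, hbt⟩ z
        rcases hchain.total hs ht with h | h
        · exact ⟨t, ht, (hc ht).1 a (h has) b hbt z⟩
        · exact ⟨s, hs, (hc hs).1 a has b (h hbt) z⟩
      · obtain ⟨s, hs⟩ := hne
        exact ⟨s, hs, (hc hs).2.1⟩
      · rintro ⟨s, hs, hys⟩
        exact (hc hs).2.2 hys) {x} (by
      refine ⟨?_, rfl, fun h => hxy (Set.mem_singleton_iff.mp h).symm⟩
      rintro a rfl b rfl z
      exact absorb M _ _)
  obtain ⟨⟨hconv, hx, hy⟩, hmax⟩ := hC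
  have key : ∀ u, u ∉ C → ∃ c ∈ C, M.m u c y = y := by
    intro u hu
    by_contra hcon
    have := hmax (y := {z | ∃ c ∈ C, M.m u c z = z})
      ⟨join_convex M hconv u, ⟨x, hx, absorb'' M _ _⟩, hcon⟩
      (fun c hc => ⟨c, hc, absorb'' M _ _⟩)
    exact hu (this ⟨x, hx, absorb' M _ _⟩)
  refine ⟨C, ⟨⟨x, hx⟩, ⟨y, hy⟩, hconv, ?_⟩, hx, hy⟩
  intro u hu v hv z hw
  obtain ⟨c, hc, h1⟩ := key u hu
  obtain ⟨c', hc', h2⟩ := key v hv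
  have hp := hconv c hc c' hc' y
  set p := M.m c c' y with hpdef
  have B1 : Btw c y u := by
    have := b12 M u c y; rw [h1] at this; exact this.symm
  have B2 : Btw c' y v := by
    have := b12 M v c' y; rw [h2] at this; exact this.symm
  have B3 : Btw p y u := B1.tail (b13 M c c' y)
  have B4 : Btw p y v := B2.tail (b23 M c c' y)
  have B5 : Btw p y (M.m u v z) := hconv' B3 B4
  have : M.m p (M.m u v z) y = y :=
    (uniq M B5 (by simp [Btw]) (by simp [Btw])).symm
  exact hy (this ▸ hconv p hp _ hw y)
where hconv' {M : MedianSpaceStruct X} {p y u v z : X} (h3 : Btw p y u) (h4 : Btw p y v) :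
    Btw p y (M.m u v z) := hconv M h3 h4 (b12 M u v z)

/-- Iterates of the median operator. -/
def It (A : Set X) : ℕ → Set X
  | 0 => A
  | n + 1 => MSet M.m (It A n)

theorem It_succ (A : Set X) (n : ℕ) : It M A n ⊆ It M A (n + 1) :=
  fun a ha => ⟨a, ha, a, ha, a, ha, absorb M a a⟩

theorem It_le (A : Set X) {n k : ℕ} (h : n ≤ k) : It M A n ⊆ It M A k :=
  monotone_nat_of_le_succ (f := It M A) (It_succ M A) h

theorem It_mono {A B : Set X} (h : A ⊆ B) (n : ℕ) : It M A n ⊆ It M B n := by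
  induction n with
  | zero => exact h
  | succ n ih =>
    rintro _ ⟨a, ha, b, hb, c, hc, rfl⟩
    exact ⟨a, ih ha, b, ih hb, c, ih hc, rfl⟩

theorem It_close (A : Set X) (R : ℝ)
    (happrox : ∀ a ∈ A, ∀ b ∈ A, ∀ c ∈ A, ∃ p ∈ A, dist (M.m a b c) p ≤ R) (n : ℕ) :
    ∃ C : ℝ, ∀ x ∈ It M A n, ∃ p ∈ A, dist x p ≤ C := by
  induction n with
  | zero => exact ⟨0, fun x hx => ⟨x, hx, by simp⟩⟩
  | succ n ih =>
    obtain ⟨C, hC⟩ := ih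
    refine ⟨C + C + C + R, ?_⟩
    rintro _ ⟨a, ha, b, hb, c, hc, rfl⟩
    obtain ⟨a', ha', h1⟩ := hC a ha
    obtain ⟨b', hb', h2⟩ := hC b hb
    obtain ⟨c', hc', h3⟩ := hC c hc
    obtain ⟨p, hp, h4⟩ := happrox a' ha' b' hb' c' hc'
    refine ⟨p, hp, ?_⟩
    have := lip M a b c a' b' c'
    have := dist_triangle (M.m a b c) (M.m a' b' c') p
    linarith

theorem span_induction {A : Set X} {x : X} (hx : x ∈ medSpan M.m A) (P : X → Prop)
    (h0 : ∀ a ∈ A, P a) (h1 : ∀ a b c, P a → P b → P c → P (M.m a b c)) : P x :=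
  hx {x | P x} ⟨h0, fun a ha b hb c hc => h1 a b c ha hb hc⟩

theorem sub_span (A : Set X) : A ⊆ medSpan M.m A := fun _ ha _ hS => hS.1 ha

theorem span_closed {A : Set X} {a b c : X} (ha : a ∈ medSpan M.m A) (hb : b ∈ medSpan M.m A)
    (hc : c ∈ medSpan M.m A) : M.m a b c ∈ medSpan M.m A :=
  fun S hS => hS.2 a (ha S hS) b (hb S hS) c (hc S hS)

theorem span_mono {A B : Set X} (h : A ⊆ B) : medSpan M.m A ⊆ medSpan M.m B :=
  fun _ hx S hS => hx S ⟨h.trans hS.1, hS.2⟩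

theorem It_span (A : Set X) (n : ℕ) : It M A n ⊆ medSpan M.m A := by
  induction n with
  | zero => exact sub_span M A
  | succ n ih =>
    rintro _ ⟨a, ha, b, hb, c, hc, rfl⟩
    exact span_closed M (ih ha) (ih hb) (ih hc)

theorem span_finite {A : Set X} {x : X} (hx : x ∈ medSpan M.m A) :
    ∃ F : Set X, F.Finite ∧ F ⊆ A ∧ x ∈ medSpan M.m F := by
  refine span_induction M hx (fun x => ∃ F : Set X, F.Finite ∧ F ⊆ A ∧ x ∈ medSpan M.m F) (fun a ha => ⟨{a}, Set.finite_singleton a, by simpa using ha,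
    sub_span M _ rfl⟩) ?_
  rintro a b c ⟨F, h1, h2, h3⟩ ⟨G, g1, g2, g3⟩ ⟨H, k1, k2, k3⟩
  refine ⟨F ∪ G ∪ H, (h1.union g1).union k1, Set.union_subset (Set.union_subset h2 g2) k2, ?_⟩
  exact span_closed M (span_mono M (fun _ h => Or.inl (Or.inl h)) h3)
    (span_mono M (fun _ h => Or.inl (Or.inr h)) g3) (span_mono M (fun _ h => Or.inr h) k3)

theorem two_of {h : Set X} (hh : IsConvexSet M.m hᶜ) {a b c : X} (hm : M.m a b c ∈ h) :
    (a ∈ h ∧ b ∈ h) ∨ (a ∈ h ∧ c ∈ h) ∨ (b ∈ h ∧ c ∈ h) := by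
  have h1 : ¬ (a ∉ h ∧ b ∉ h) := fun ⟨p, q⟩ => hh a p b q c hm
  have h2 : ¬ (a ∉ h ∧ c ∉ h) := fun ⟨p, q⟩ => by
    rw [swap23] at hm; exact hh a p c q b hm
  have h3 : ¬ (b ∉ h ∧ c ∉ h) := fun ⟨p, q⟩ => by
    rw [swap12, swap23] at hm; exact hh b p c q a hm
  tauto

theorem of_two {h : Set X} (hh : IsConvexSet M.m h) {a b c : X}
    (hm : (a ∈ h ∧ b ∈ h) ∨ (a ∈ h ∧ c ∈ h) ∨ (b ∈ h ∧ c ∈ h)) : M.m a b c ∈ h := by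
  rcases hm with ⟨p, q⟩ | ⟨p, q⟩ | ⟨p, q⟩
  · exact hh a p b q c
  · rw [swap23]; exact hh a p c q b
  · rw [swap12, swap23]; exact hh b p c q a

theorem two_prop {F : Set X} {x : X} (hx : x ∈ medSpan M.m F) {h k : Set X}
    (hh : IsConvexSet M.m hᶜ) (hk : IsConvexSet M.m kᶜ) (xh : x ∈ h) (xk : x ∈ k) :
    ∃ a ∈ F, a ∈ h ∧ a ∈ k := by
  refine span_induction M hx (fun x => x ∈ h → x ∈ k → ∃ a ∈ F, a ∈ h ∧ a ∈ k)
    (fun a ha p q => ⟨a, ha, p, q⟩) ?_ xh xk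
  intro a b c ha hb hc p q
  rcases two_of M hh p with ⟨p1, p2⟩ | ⟨p1, p2⟩ | ⟨p1, p2⟩ <;>
    rcases two_of M hk q with ⟨q1, q2⟩ | ⟨q1, q2⟩ | ⟨q1, q2⟩ <;>
    first
      | exact ha (by assumption) (by assumption)
      | exact hb (by assumption) (by assumption)
      | exact hc (by assumption) (by assumption)

theorem mono_prop {F : Set X} {y : X} (hy : y ∈ medSpan M.m F) {h k : Set X}
    (hh : IsConvexSet M.m hᶜ) (hk : IsConvexSet M.m k) (hF : h ∩ F ⊆ k) (yh : y ∈ h) : y ∈ k := by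
  refine span_induction M hy (fun y => y ∈ h → y ∈ k) (fun a ha p => hF ⟨p, ha⟩) ?_ yh
  intro a b c ha hb hc p
  have := two_of M hh p
  apply of_two M hk
  tauto

theorem avoid {F : Set X} {x : X} (hx : x ∈ medSpan M.m F) (N : ℕ) :
    ∀ T : Finset (Set X), T.card ≤ N → (∀ h ∈ T, IsHalfspace M.m h ∧ x ∈ h) →
    ∃ c ∈ It M F N, ∀ h ∈ T, c ∈ h := by
  classical
  induction N with
  | zero =>
    intro T hT hh
    have hu : IsConvexSet M.m (Set.univ : Set X)ᶜ := by
      intro a ha; simp at ha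
    obtain ⟨a, ha, -⟩ := two_prop M hx hu hu trivial trivial
    have : T = ∅ := by simpa using hT
    exact ⟨a, ha, by simp [this]⟩
  | succ N ih =>
    intro T hT hh
    by_cases h3 : 2 < T.card
    · obtain ⟨s, t, u, hs, ht, hu, hst, hsu, htu⟩ := Finset.two_lt_card_iff.mp h3
      have step : ∀ s ∈ T, ∃ c ∈ It M F N, ∀ h ∈ T, h ≠ s → c ∈ h := by
        intro s hs
        obtain ⟨c, hc, hc'⟩ := ih (T.erase s) (by rw [Finset.card_erase_of_mem hs]; omega)
          (fun h hmem => hh h (Finset.mem_of_mem_erase hmem))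
        exact ⟨c, hc, fun h hT hne => hc' h (Finset.mem_erase.mpr ⟨hne, hT⟩)⟩
      obtain ⟨a, ha, ha'⟩ := step s hs
      obtain ⟨b, hb, hb'⟩ := step t ht
      obtain ⟨c, hc, hc'⟩ := step u hu
      refine ⟨M.m a b c, ⟨a, ha, b, hb, c, hc, rfl⟩, ?_⟩
      intro h hT
      apply of_two M (hh h hT).1.2.2.1
      by_cases e1 : h = s
      · exact Or.inr (Or.inr ⟨hb' h hT (e1 ▸ hst), hc' h hT (e1 ▸ hsu)⟩)
      · by_cases e2 : h = t
        · exact Or.inr (Or.inl ⟨ha' h hT e1, hc' h hT (e2 ▸ htu)⟩)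
        · exact Or.inl ⟨ha' h hT e1, hb' h hT e2⟩
    · have : ∃ p q : Set X, (IsConvexSet M.m pᶜ ∧ x ∈ p) ∧ (IsConvexSet M.m qᶜ ∧ x ∈ q) ∧
          ∀ h ∈ T, h = p ∨ h = q := by
        have hu : IsConvexSet M.m (Set.univ : Set X)ᶜ := by
          intro a ha; simp at ha
        have hcases : T.card = 0 ∨ T.card = 1 ∨ T.card = 2 := by omega
        rcases hcases with h | h | h
        · rw [Finset.card_eq_zero] at h
          exact ⟨Set.univ, Set.univ, ⟨hu, trivial⟩, ⟨hu, trivial⟩, by simp [h]⟩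
        · obtain ⟨p, rfl⟩ := Finset.card_eq_one.mp h
          have := hh p (by simp)
          exact ⟨p, p, ⟨this.1.2.2.2, this.2⟩, ⟨this.1.2.2.2, this.2⟩, by simp⟩
        · obtain ⟨p, q, -, rfl⟩ := Finset.card_eq_two.mp h
          have h1 := hh p (by simp)
          have h2 := hh q (by simp)
          exact ⟨p, q, ⟨h1.1.2.2.2, h1.2⟩, ⟨h2.1.2.2.2, h2.2⟩, by simp⟩
      obtain ⟨p, q, ⟨p1, p2⟩, ⟨q1, q2⟩, hpq⟩ := this
      obtain ⟨a, ha, hap, haq⟩ := two_prop M hx p1 q1 p2 q2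
      refine ⟨a, It_le M F (Nat.zero_le _) ha, ?_⟩
      intro h hT
      rcases hpq h hT with rfl | rfl
      · exact hap
      · exact haq

/-- A finite family of representatives of trace-minimal halfspaces containing `x`. -/
theorem exists_reps {F : Set X} (hF : F.Finite) (x : X) :
    ∃ 𝓡 : Set (Set X), 𝓡.Finite ∧ (∀ h ∈ 𝓡, IsHalfspace M.m h ∧ x ∈ h) ∧
      (∀ h ∈ 𝓡, ∀ k ∈ 𝓡, h ≠ k → ¬ h ⊆ k) ∧
      (∀ g, IsHalfspace M.m g → x ∈ g → ∃ h ∈ 𝓡, h ∩ F ⊆ g) := by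
  set 𝒯 : Set (Set X) := (fun h => h ∩ F) '' {h | IsHalfspace M.m h ∧ x ∈ h} with h𝒯
  have hfin : 𝒯.Finite := hF.finite_subsets.subset (by
    rintro _ ⟨h, -, rfl⟩; exact Set.inter_subset_right)
  have hch : ∀ E : Set X, ∃ h : Set X, E ∈ 𝒯 → (IsHalfspace M.m h ∧ x ∈ h) ∧ h ∩ F = E := by
    intro E
    by_cases hE : E ∈ 𝒯
    · obtain ⟨h, h1, h2⟩ := hE
      exact ⟨h, fun _ => ⟨h1, h2⟩⟩
    · exact ⟨∅, fun h => absurd h hE⟩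
  choose rep hrep using hch
  refine ⟨rep '' {E | Minimal (· ∈ 𝒯) E}, ?_, ?_, ?_, ?_⟩
  · exact (hfin.subset (fun E hE => hE.1)).image _
  · rintro _ ⟨E, hE, rfl⟩
    exact (hrep E hE.1).1
  · rintro _ ⟨E, hE, rfl⟩ _ ⟨E', hE', rfl⟩ hne hsub
    apply hne
    have h1 := (hrep E hE.1).2
    have h2 := (hrep E' hE'.1).2
    have h3 : E ⊆ E' := by
      rw [← h1, ← h2]; exact Set.inter_subset_inter_left _ hsub
    have : E = E' := Set.Subset.antisymm h3 (hE'.2 hE.1 h3)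
    rw [this]
  · intro g hg hxg
    obtain ⟨E, hE, hmin⟩ := hfin.exists_le_minimal (a := g ∩ F) ⟨g, ⟨hg, hxg⟩, rfl⟩
    refine ⟨rep E, ⟨E, hmin, rfl⟩, ?_⟩
    rw [(hrep E hmin.1).2]
    exact hE.trans Set.inter_subset_left

theorem span_fin_bounded (r : ℕ) (hr : RankLE M.m r) {F : Set X} (hF : F.Finite) {x : X}
    (hx : x ∈ medSpan M.m F) : x ∈ It M F (r + r + 1) := by
  classical
  obtain ⟨𝓡, hfin, hhalf, hnest, hmin⟩ := exists_reps M hF x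
  let bad : X → Finset (Set X) := fun y => hfin.toFinset.filter (fun h => y ∉ h)
  have hbad : ∀ y h, h ∈ bad y ↔ h ∈ 𝓡 ∧ y ∉ h := by
    intro y h; simp [bad]
  have hcard : ∀ y, (bad y).card ≤ r := by
    intro y
    apply hr
    · intro h hh
      exact (hhalf h ((hbad y h).mp hh).1).1
    · intro h hh k hk hne
      obtain ⟨h1, h2⟩ := (hbad y h).mp hh
      obtain ⟨k1, k2⟩ := (hbad y k).mp hk
      refine ⟨⟨x, (hhalf h h1).2, (hhalf k k1).2⟩, ?_, ?_, ⟨y, h2, k2⟩⟩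
      · obtain ⟨z, p, q⟩ := Set.not_subset.mp (hnest h h1 k k1 hne)
        exact ⟨z, p, q⟩
      · obtain ⟨z, p, q⟩ := Set.not_subset.mp (hnest k k1 h h1 hne.symm)
        exact ⟨z, q, p⟩
  have hb : ∀ y, ∀ h ∈ bad y, IsHalfspace M.m h ∧ x ∈ h :=
    fun y h hh => hhalf h ((hbad y h).mp hh).1
  obtain ⟨a, ha, -⟩ := avoid M hx 0 ∅ (by simp) (by simp)
  obtain ⟨b, hb1, hb2⟩ := avoid M hx r (bad a) (hcard a) (hb a)
  obtain ⟨c, hc1, hc2⟩ := avoid M hx (r + r) (bad a ∪ bad b)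
    ((Finset.card_union_le _ _).trans (Nat.add_le_add (hcard a) (hcard b))) (by
      intro h hh
      rcases Finset.mem_union.mp hh with h1 | h1
      · exact hb a h h1
      · exact hb b h h1)
  have hmem : M.m a b c ∈ It M F (r + r + 1) :=
    ⟨a, It_le M F (Nat.zero_le _) ha, b, It_le M F (Nat.le_add_right _ _) hb1, c, hc1, rfl⟩
  have hall : ∀ h ∈ 𝓡, M.m a b c ∈ h := by
    intro h hh
    apply of_two M (hhalf h hh).1.2.2.1
    have h1 := hbad a h
    have h2 := hbad b h
    have h3 := hb2 h
    have h4 := hc2 h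
    rw [Finset.mem_union] at h4
    tauto
  by_contra hcon
  have hne : x ≠ M.m a b c := fun h => hcon (h ▸ hmem)
  obtain ⟨g, hg, hxg, hyg⟩ := separate M hne
  obtain ⟨h, hh, hsub⟩ := hmin g hg hxg
  exact hyg (mono_prop M (It_span M F _ hmem) (hhalf h hh).1.2.2.2 hg.2.2.1 hsub (hall h hh))

end MedAux

/-- if `X` is a median space of rank at most `r` and `A ⊆ X`
is an approximate median subalgebra (`m(A×A×A) ⊆ N_R(A)` for some `R ≥ 0`),
then the Hausdorff distance between `A` and the median subalgebra generated by
`A` is finite. -/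
theorem stmt10 {X : Type*} [MetricSpace X] (M : MedianSpaceStruct X) (r : ℕ)
    (hr : RankLE M.m r) (A : Set X) (R : ℝ) (hR : 0 ≤ R)
    (happrox : ∀ a ∈ A, ∀ b ∈ A, ∀ c ∈ A, ∃ p ∈ A, dist (M.m a b c) p ≤ R) :
    EMetric.hausdorffEdist A (medSpan M.m A) ≠ ⊤ := by
  obtain ⟨C, hC⟩ := MedAux.It_close M A R happrox (r + r + 1)
  refine ne_top_of_le_ne_top (ENNReal.ofReal_ne_top (r := C)) ?_
  apply Metric.hausdorffEDist_le_of_mem_edist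
  · intro a ha
    exact ⟨a, MedAux.sub_span M A ha, by simp⟩
  · intro x hx
    obtain ⟨F, hF, hFA, hxF⟩ := MedAux.span_finite M hx
    obtain ⟨p, hp, hd⟩ := hC x (MedAux.It_mono M hFA _ (MedAux.span_fin_bounded M r hr hF hxF))
    refine ⟨p, hp, ?_⟩
    rw [edist_dist]
    exact ENNReal.ofReal_le_ofReal hd
end

section
/- Let G be a finitely generated group with finite generating set S₀ and associated left-invariant word metric d. Suppose there is a constant c > 0 such that for every finite generating set S ⊆ G and all x,y ∈ G one has d(x,y) ≤ c·max_{s∈S}[d(x,sx) + d(y,sy)] (i.e., the left-multiplication action of G on itself is c-uniformly non-elementary). Then every central element z ∈ Z(G) satisfies |z|_{S₀} ≤ 2c·max_{s∈S₀}|s|_{S₀} = 2c, and consequently the centre Z(G) is finite. -/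
/-- The word length of `g` with respect to a generating set `S`: the least
length of a word in `S ∪ S⁻¹` representing `g`. -/
noncomputable def wordLength {G : Type*} [Group G] (S : Set G) (g : G) : ℕ :=
  sInf {n : ℕ | ∃ l : List G, l.length = n ∧ (∀ x ∈ l, x ∈ S ∨ x⁻¹ ∈ S) ∧ l.prod = g}

/-- The left-invariant word metric `d(a,b) = |a⁻¹ b|_S`. -/
noncomputable def wordDist {G : Type*} [Group G] (S : Set G) (a b : G) : ℕ :=
  wordLength S (a⁻¹ * b)

/-- The word distance from `g` to the fixed subgroup `Fix φ`. -/
noncomputable def distToFix {G : Type*} [Group G] (S : Set G) (φ : G ≃* G) (g : G) : ℕ :=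
  sInf {n : ℕ | ∃ h : G, φ h = h ∧ wordDist S g h = n}

theorem sphere_finite_aux {G : Type*} [Group G] (S : Set G) (hS : S.Finite) (n : ℕ) :
    {g : G | ∃ l : List G, l.length = n ∧ (∀ x ∈ l, x ∈ S ∨ x⁻¹ ∈ S) ∧ l.prod = g}.Finite := by
  induction n with
  | zero =>
    refine (Set.finite_singleton (1 : G)).subset ?_
    rintro g ⟨l, hl, -, rfl⟩
    simp [List.length_eq_zero_iff.mp hl]
  | succ n ih =>
    have hT : (S ∪ (fun x => x⁻¹) '' S).Finite := hS.union (hS.image _)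
    refine (Set.Finite.image2 (fun a b => a * b) hT ih).subset ?_
    rintro g ⟨l, hl, hx, rfl⟩
    cases l with
    | nil => simp at hl
    | cons a l =>
      refine ⟨a, ?_, l.prod, ⟨l, by simpa using hl,
        fun x h => hx x (List.mem_cons_of_mem _ h), rfl⟩, by simp⟩
      rcases hx a List.mem_cons_self with h | h
      · exact Or.inl h
      · exact Or.inr ⟨a⁻¹, h, by simp⟩

theorem wordLength_spec_aux {G : Type*} [Group G] (S : Set G)
    (hgen : Subgroup.closure S = ⊤) (g : G) :
    ∃ l : List G, l.length = wordLength S g ∧ (∀ x ∈ l, x ∈ S ∨ x⁻¹ ∈ S) ∧ l.prod = g := by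
  have hg : g ∈ Subgroup.closure S := by rw [hgen]; trivial
  rw [← Subgroup.mem_toSubmonoid, Subgroup.closure_toSubmonoid] at hg
  obtain ⟨l, h1, h2⟩ := Submonoid.exists_list_of_mem_closure hg
  exact Nat.sInf_mem (s := {n : ℕ | ∃ l : List G, l.length = n ∧
    (∀ x ∈ l, x ∈ S ∨ x⁻¹ ∈ S) ∧ l.prod = g}) ⟨l.length, l, rfl, h1, h2⟩

theorem wordLength_le_one_aux {G : Type*} [Group G] (S : Set G) (s : G) (hs : s ∈ S) :
    wordLength S s ≤ 1 :=
  Nat.sInf_le ⟨[s], rfl, by simp [hs], by simp⟩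

/-- if the left-multiplication action of a finitely generated
group `G` on itself (with word metric for the finite generating set `S₀`) is
`c`-uniformly non-elementary, then every central element `z` satisfies
`|z|_{S₀} ≤ 2c`, and the centre of `G` is finite. -/
theorem stmt13 {G : Type*} [Group G] (S₀ : Finset G)
    (hgen : Subgroup.closure (S₀ : Set G) = ⊤)
    (c : ℝ) (hc : 0 < c)
    (hUNE : ∀ S : Finset G, Subgroup.closure (S : Set G) = ⊤ →
      ∀ x y : G, (wordDist (S₀ : Set G) x y : ℝ) ≤
        c * ((S.sup fun s =>
          wordDist (S₀ : Set G) x (s * x) + wordDist (S₀ : Set G) y (s * y) : ℕ) : ℝ)) :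
    (∀ z ∈ Subgroup.center G, (wordLength (S₀ : Set G) z : ℝ) ≤ 2 * c) ∧
    (Subgroup.center G : Set G).Finite := by
  have key : ∀ z ∈ Subgroup.center G, (wordLength (S₀ : Set G) z : ℝ) ≤ 2 * c := by
    intro z hz
    have h := hUNE S₀ hgen 1 z
    have hsup : (S₀.sup fun s => wordDist (S₀ : Set G) 1 (s * 1) +
        wordDist (S₀ : Set G) z (s * z)) ≤ 2 := by
      refine Finset.sup_le fun s hs => ?_
      have h1 := wordLength_le_one_aux (S₀ : Set G) s hs
      have e : z⁻¹ * (s * z) = s := by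
        rw [Subgroup.mem_center_iff.mp hz s]; simp
      simp only [wordDist, e, inv_one, one_mul, mul_one]
      omega
    have hsup' : ((S₀.sup fun s => wordDist (S₀ : Set G) 1 (s * 1) +
        wordDist (S₀ : Set G) z (s * z) : ℕ) : ℝ) ≤ 2 := by exact_mod_cast hsup
    have e1 : wordDist (S₀ : Set G) 1 z = wordLength (S₀ : Set G) z := by simp [wordDist]
    rw [e1] at h
    nlinarith [mul_le_mul_of_nonneg_left hsup' hc.le]
  refine ⟨key, ?_⟩
  refine ((Set.finite_Iic ⌊2 * c⌋₊).biUnion fun n _ =>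
    sphere_finite_aux (S₀ : Set G) S₀.finite_toSet n).subset ?_
  intro z hz
  simp only [Set.mem_iUnion]
  exact ⟨wordLength (S₀ : Set G) z, Nat.le_floor (key z hz),
    wordLength_spec_aux (S₀ : Set G) hgen z⟩
end
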